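/- Let Ω be a domain (nonempty open connected set) in ℝⁿ (n ≥ 2) whose boundary ∂Ω is a d-set with n−1 < d < n, let 1 < p < ∞, 1 ≤ q < ∞ and s > (n−d)/p. Then there is a constant c (depending on p, q, s, n, d and ∂Ω) such that for every f ∈ F^s_{pq}(ℝⁿ) whose trace satisfies Tr_{∂Ω} f = 0 ℋᵈ-almost everywhere on ∂Ω, one has ‖f·χ_Ω‖_{F^s_{pq}(ℝⁿ)} ≤ c ‖f‖_{F^s_{pq}(ℝⁿ)}. -/

import Mathlib

open MeasureTheory Metric Set Filter
open scoped ENNReal NNReal Topology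

noncomputable section

/-- ℝⁿ, with the sup-norm (given by the product metric on `Fin n → ℝ`). -/
abbrev Rn (n : ℕ) := Fin n → ℝ

/-- `S` is an (Ahlfors) `d`-set with regularity constant `C`. -/
def IsDSet {n : ℕ} (S : Set (Rn n)) (d C : ℝ) : Prop :=
  IsClosed S ∧ 1 < C ∧ ∀ w ∈ S, ∀ r : ℝ, 0 < r → r ≤ 1 →
    ENNReal.ofReal (C⁻¹ * r ^ d) ≤ μH[d] (closedBall w r ∩ S) ∧
      μH[d] (closedBall w r ∩ S) ≤ ENNReal.ofReal (C * r ^ d)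

/-- `Tr_S f = 0` pointwise ℋᵈ-almost everywhere on `S`. -/
def TraceZero {n : ℕ} (S : Set (Rn n)) (d : ℝ) (f : Rn n → ℝ) : Prop :=
  ∀ᵐ x ∂(μH[d]).restrict S,
    Tendsto (fun r : ℝ => ⨍ y in closedBall x r, f y) (𝓝[>] 0) (𝓝 0)

/-- The normalized local best approximation `ℰ_k(f, Q(x,r))_{L^u}`. -/
def localApprox {n : ℕ} (k : ℕ) (u : ℝ) (f : Rn n → ℝ) (x : Rn n) (r : ℝ) : ℝ≥0∞ :=
  ⨅ (P : MvPolynomial (Fin n) ℝ) (_ : P.totalDegree ≤ k - 1),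
    ((volume (closedBall x r))⁻¹ *
      ∫⁻ y in closedBall x r, ENNReal.ofReal |f y - MvPolynomial.eval y P| ^ u) ^ (1 / u)

/-- The Triebel–Lizorkin norm `‖f‖_{F^s_{pq}}` (with `k = [s]+1`). -/
def tlNorm {n : ℕ} (s p q : ℝ) (f : Rn n → ℝ) : ℝ≥0∞ :=
  (∫⁻ x, ENNReal.ofReal |f x| ^ p) ^ (1 / p) +
  (∫⁻ x, ((∫⁻ t in Set.Ioo (0:ℝ) 1,
      (ENNReal.ofReal (t ^ (-s)) * localApprox (⌊s⌋₊ + 1) 1 f x t) ^ q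
        * ENNReal.ofReal t⁻¹) ^ (1 / q)) ^ p) ^ (1 / p)

/-- Power of a real number as an extended nonnegative real. -/
def pw (t a : ℝ) : ℝ≥0∞ := ENNReal.ofReal (t ^ a)

lemma pw_add {t : ℝ} (ht : 0 < t) (a b : ℝ) : pw t (a + b) = pw t a * pw t b := by
  unfold pw
  rw [Real.rpow_add ht, ENNReal.ofReal_mul (by positivity)]

lemma pw_rpow {t : ℝ} (ht : 0 < t) (a c : ℝ) : (pw t a) ^ c = pw t (a * c) := by
  unfold pw
  rw [ENNReal.ofReal_rpow_of_pos (by positivity), Real.rpow_mul ht.le]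

lemma pw_zero (t : ℝ) : pw t 0 = 1 := by simp [pw]

lemma pw_ne_top (t a : ℝ) : pw t a ≠ ⊤ := ENNReal.ofReal_ne_top

lemma pw_ne_zero {t : ℝ} (ht : 0 < t) (a : ℝ) : pw t a ≠ 0 := by
  unfold pw
  rw [ne_eq, ENNReal.ofReal_eq_zero, not_le]; positivity

lemma pw_one (t : ℝ) : pw t 1 = ENNReal.ofReal t := by simp [pw]

lemma pw_mul_base {c t : ℝ} (hc : 0 ≤ c) (ht : 0 ≤ t) (a : ℝ) :
    pw (c * t) a = pw c a * pw t a := by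
  unfold pw
  rw [Real.mul_rpow hc ht, ENNReal.ofReal_mul (by positivity)]

lemma pw_mono {t u a : ℝ} (ht : 0 ≤ t) (h : t ≤ u) (ha : 0 ≤ a) : pw t a ≤ pw u a :=
  ENNReal.ofReal_le_ofReal (Real.rpow_le_rpow ht h ha)

lemma measurable_pw (a : ℝ) : Measurable (fun t : ℝ => pw t a) := by
  unfold pw
  exact (Measurable.pow_const measurable_id a).ennreal_ofReal

/-- comparison of powers of comparable numbers -/
lemma pw_comp (a c M : ℝ) (hc : 0 < c) (hM : 0 < M) :
    ∃ K : ℝ≥0, ∀ r u : ℝ, 0 < r → c * r ≤ u → u ≤ M * r → pw r a ≤ K * pw u a := by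
  refine ⟨Real.toNNReal ((1 / c) ^ a + (1 / M) ^ a), fun r u hr h1 h2 => ?_⟩
  have hu : 0 < u := lt_of_lt_of_le (by positivity) h1
  have hx : 0 < r / u := by positivity
  have e1 : r / u ≤ 1 / c := by rw [div_le_div_iff₀ hu hc]; linarith
  have e2 : 1 / M ≤ r / u := by rw [div_le_div_iff₀ hM hu]; linarith
  have : (r / u) ^ a ≤ (1 / c) ^ a + (1 / M) ^ a := by
    rcases le_total 0 a with ha | ha
    · have := Real.rpow_le_rpow hx.le e1 ha
      have : 0 ≤ (1 / M) ^ a := by positivity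
      linarith
    · have := Real.rpow_le_rpow_of_nonpos (by positivity) e2 ha
      have : 0 ≤ (1 / c) ^ a := by positivity
      linarith
  have h3 : r ^ a = (r / u) ^ a * u ^ a := by
    rw [← Real.mul_rpow hx.le hu.le]; congr 1; field_simp
  unfold pw
  rw [h3, ENNReal.ofReal_mul (by positivity)]
  gcongr
  rw [← ENNReal.ofReal]
  exact ENNReal.ofReal_le_ofReal this

lemma vol_cb {n : ℕ} (x : Rn n) {r : ℝ} (hr : 0 < r) :
    volume (closedBall x r) = 2 ^ n * pw r n := by
  rw [Real.volume_pi_closedBall x hr.le, mul_pow, ENNReal.ofReal_mul (by positivity)]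
  simp [pw, ENNReal.ofReal_pow]

lemma vol_cb_ne_zero {n : ℕ} (x : Rn n) {r : ℝ} (hr : 0 < r) :
    volume (closedBall x r) ≠ 0 := (measure_closedBall_pos _ _ hr).ne'

lemma vol_cb_ne_top {n : ℕ} (x : Rn n) (r : ℝ) :
    volume (closedBall x r) ≠ ⊤ := measure_closedBall_lt_top.ne

lemma lint_Ioi {b c : ℝ} (hb : 0 < b) (hc : 0 < c) :
    ∫⁻ t in Ioi c, pw t (-b - 1) ≤ ((Real.toNNReal b⁻¹ : ℝ≥0) : ℝ≥0∞) * pw c (-b) := by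
  unfold pw
  rw [← ofReal_integral_eq_lintegral_ofReal (integrableOn_Ioi_rpow_of_lt (by linarith) hc)]
  · rw [integral_Ioi_rpow_of_lt (by linarith) hc, ← ENNReal.ofReal, ← ENNReal.ofReal_mul (by positivity)]
    apply ENNReal.ofReal_le_ofReal
    apply le_of_eq
    have : -b - 1 + 1 = -b := by ring
    rw [this]; field_simp
  · filter_upwards [self_mem_ae_restrict measurableSet_Ioi] with t ht
    exact Real.rpow_nonneg (hc.le.trans (le_of_lt ht)) _

lemma lint_Ioc {a R : ℝ} (ha : 0 < a) (hR : 0 < R) :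
    ∫⁻ t in Ioc 0 R, pw t (a - 1) ≤ ((Real.toNNReal a⁻¹ : ℝ≥0) : ℝ≥0∞) * pw R a := by
  unfold pw
  have hi : IntervalIntegrable (fun t : ℝ => t ^ (a - 1)) volume 0 R :=
    intervalIntegral.intervalIntegrable_rpow' (by linarith)
  rw [← ofReal_integral_eq_lintegral_ofReal]
  · rw [← intervalIntegral.integral_of_le hR.le, integral_rpow (Or.inl (by linarith)),
      ← ENNReal.ofReal, ← ENNReal.ofReal_mul (by positivity)]
    apply ENNReal.ofReal_le_ofReal
    apply le_of_eq
    have : a - 1 + 1 = a := by ring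
    rw [this, Real.zero_rpow ha.ne']; field_simp; simp
  · exact (intervalIntegrable_iff_integrableOn_Ioc_of_le hR.le).1 hi
  · filter_upwards [self_mem_ae_restrict measurableSet_Ioc] with t ht
    exact Real.rpow_nonneg (le_of_lt ht.1) _

lemma lint_low (a : ℝ) :
    ∃ K : ℝ≥0, ∀ c : ℝ, 0 < c → pw c a ≤ K * ∫⁻ t in Ioo c (2 * c), pw t (a - 1) := by
  obtain ⟨K, hK⟩ := pw_comp (a - 1) 1 2 one_pos two_pos
  refine ⟨K, fun c hc => ?_⟩
  have h1 : ∫⁻ t in Ioo c (2 * c), pw c (a - 1) ≤ ∫⁻ t in Ioo c (2 * c), K * pw t (a - 1) := by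
    apply setLIntegral_mono ((measurable_pw _).const_mul _)
    intro t ht
    exact hK c t hc (by linarith [ht.1]) ht.2.le
  rw [lintegral_const_mul _ (measurable_pw _)] at h1
  refine le_trans (le_of_eq ?_) h1
  rw [lintegral_const, Measure.restrict_apply_univ, Real.volume_Ioo]
  have : 2 * c - c = c := by ring
  rw [this, ← pw_one c, ← pw_add hc]; congr 1; ring



lemma poly_hasStrict {n : ℕ} (P : MvPolynomial (Fin n) ℝ) (z : Rn n) :
    HasStrictFDerivAt (fun y : Rn n => MvPolynomial.eval y P)
      (∑ i, (MvPolynomial.eval z (MvPolynomial.pderiv i P)) •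
        (ContinuousLinearMap.proj i : Rn n →L[ℝ] ℝ)) z := by
  induction P using MvPolynomial.induction_on with
  | C a => simpa using hasStrictFDerivAt_const a z
  | add P Q hP hQ =>
    simp only [map_add, add_smul, Finset.sum_add_distrib]
    exact hP.add hQ
  | mul_X P j hP =>
    have hj : HasStrictFDerivAt (fun y : Rn n => y j)
      (ContinuousLinearMap.proj j : Rn n →L[ℝ] ℝ) z :=
      (ContinuousLinearMap.proj j : Rn n →L[ℝ] ℝ).hasStrictFDerivAt
    have := hP.mul hj
    simp only [map_mul, MvPolynomial.eval_X]
    refine this.congr_fderiv ?_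
    ext v
    simp [MvPolynomial.pderiv_X, Pi.single_apply, Finset.mul_sum, add_mul, Finset.sum_add_distrib,
      mul_assoc, apply_ite]

lemma totalDegree_pderiv_lt {n : ℕ} (P : MvPolynomial (Fin n) ℝ) (i : Fin n)
    (h : MvPolynomial.pderiv i P ≠ 0) :
    (MvPolynomial.pderiv i P).totalDegree < P.totalDegree := by
  have key : ∀ m ∈ (MvPolynomial.pderiv i P).support, (m.sum fun _ e => e) + 1 ≤ P.totalDegree := by
    intro m hm
    rw [MvPolynomial.mem_support_iff, MvPolynomial.coeff_pderiv] at hm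
    have h1 : m + Finsupp.single i 1 ∈ P.support := by
      rw [MvPolynomial.mem_support_iff]; exact left_ne_zero_of_mul hm
    have h2 := MvPolynomial.le_totalDegree h1
    rw [Finsupp.sum_add_index' (by simp) (by simp)] at h2
    simpa using h2
  obtain ⟨m, hm⟩ := MvPolynomial.support_nonempty.2 h
  have h1 := key m hm
  rw [MvPolynomial.totalDegree, Finset.sup_lt_iff (by simp; omega)]
  intro m hm
  have := key m hm
  omega

lemma regular_null {m : ℕ} {d : ℝ} (hd : (m : ℝ) < d) (P : MvPolynomial (Fin (m + 1)) ℝ)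
    (i : Fin (m + 1)) :
    μH[d] {z : Rn (m + 1) | MvPolynomial.eval z P = 0 ∧
      MvPolynomial.eval z (MvPolynomial.pderiv i P) ≠ 0} = 0 := by
  have hd0 : 0 < d := lt_of_le_of_lt (by positivity) hd
  apply measure_null_of_locally_null
  rintro z ⟨hz0, hz1⟩
  set a := fun j => MvPolynomial.eval z (MvPolynomial.pderiv j P) with ha
  have hai : 0 < |a i| := abs_pos.2 hz1
  obtain ⟨U, hU, hap⟩ := (poly_hasStrict P z).approximates_deriv_on_nhds (c := ‖a i‖₊ / 2)
    (Or.inr (by rw [← NNReal.coe_pos]; simpa using hz1))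
  set Z := {z : Rn (m + 1) | MvPolynomial.eval z P = 0 ∧
      MvPolynomial.eval z (MvPolynomial.pderiv i P) ≠ 0} with hZ
  refine ⟨U ∩ Z, inter_mem (mem_nhdsWithin_of_mem_nhds hU) self_mem_nhdsWithin, ?_⟩
  set A := ∑ j : Fin m, |a (i.succAbove j)| with hA
  have hA0 : 0 ≤ A := Finset.sum_nonneg fun _ _ => abs_nonneg _
  let π : Rn (m + 1) → Rn m := fun y j => y (i.succAbove j)
  set K : ℝ := 1 + 2 * (|a i| / 2 + A) / |a i| with hK
  have hK0 : 0 ≤ K := add_nonneg zero_le_one (div_nonneg (mul_nonneg two_pos.le (add_nonneg (half_pos hai).le hA0)) hai.le)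
  have main : ∀ y ∈ U ∩ Z, ∀ y' ∈ U ∩ Z, dist y y' ≤ K * dist (π y) (π y') := by
    intro y hy y' hy'
    have h := hap y hy.1 y' hy'.1
    simp only [hy.2.1, hy'.2.1, sub_self, zero_sub, norm_neg] at h
    set v := y - y' with hv
    have hπ : ∀ j, |v (i.succAbove j)| ≤ dist (π y) (π y') := by
      intro j
      have := dist_le_pi_dist (π y) (π y') j
      simpa [π, Real.dist_eq, hv] using this
    have hvi : ‖v‖ ≤ |v i| + dist (π y) (π y') := by
      rw [pi_norm_le_iff_of_nonneg (by positivity)]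
      intro j
      rcases eq_or_ne j i with rfl | hj
      · simp
      · obtain ⟨l, rfl⟩ := Fin.exists_succAbove_eq hj
        have := hπ l
        rw [Real.norm_eq_abs]
        have := abs_nonneg (v i)
        linarith
    have hD : a i * v i = (∑ j, a j • (ContinuousLinearMap.proj j : Rn (m+1) →L[ℝ] ℝ)) v
        - ∑ j : Fin m, a (i.succAbove j) * v (i.succAbove j) := by
      rw [Fin.sum_univ_succAbove _ i]
      simp
    have h2 : |∑ j : Fin m, a (i.succAbove j) * v (i.succAbove j)| ≤ A * dist (π y) (π y') := by
      refine (Finset.abs_sum_le_sum_abs _ _).trans ?_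
      rw [hA, Finset.sum_mul]
      refine Finset.sum_le_sum fun j _ => ?_
      rw [abs_mul]
      exact mul_le_mul_of_nonneg_left (hπ j) (abs_nonneg _)
    have h3 : |a i| * |v i| ≤ |a i| / 2 * ‖v‖ + A * dist (π y) (π y') := by
      rw [← abs_mul, hD]
      refine (abs_sub _ _).trans ?_
      refine add_le_add ?_ h2
      simpa using h
    have h4 : |v i| ≤ 2 * (|a i| / 2 + A) / |a i| * dist (π y) (π y') := by
      rw [div_mul_eq_mul_div, le_div_iff₀ hai]
      have := mul_le_mul_of_nonneg_left hvi hai.le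
      linarith
    rw [dist_eq_norm, hK]
    linarith
  have hinj : InjOn π (U ∩ Z) := by
    intro y hy y' hy' h
    have := main y hy y' hy'
    rw [h, dist_self, mul_zero] at this
    exact dist_le_zero.1 this
  have hlip : LipschitzOnWith K.toNNReal (Function.invFunOn π (U ∩ Z)) (π '' (U ∩ Z)) := by
    apply LipschitzOnWith.of_dist_le_mul
    rintro _ ⟨y, hy, rfl⟩ _ ⟨y', hy', rfl⟩
    rw [hinj.leftInvOn_invFunOn hy, hinj.leftInvOn_invFunOn hy', Real.coe_toNNReal _ hK0]
    exact main y hy y' hy'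
  have hle := hlip.hausdorffMeasure_image_le hd0.le
  have him : Function.invFunOn π (U ∩ Z) '' (π '' (U ∩ Z)) = U ∩ Z :=
    hinj.leftInvOn_invFunOn.image_image
  rw [him] at hle
  have hz : μH[d] (π '' (U ∩ Z)) = 0 := by
    apply measure_mono_null (subset_univ _)
    have : dimH (univ : Set (Rn m)) < (d.toNNReal : ℝ≥0) := by
      rw [Real.dimH_univ_pi_fin]
      have : (m : ℝ≥0) < d.toNNReal := by
        rw [Real.lt_toNNReal_iff_coe_lt]; simpa using hd
      exact_mod_cast this
    have := hausdorffMeasure_of_dimH_lt this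
    rwa [Real.coe_toNNReal _ hd0.le] at this
  rw [hz, mul_zero] at hle
  exact le_antisymm hle bot_le

lemma zero_null {m : ℕ} {d : ℝ} (hd : (m : ℝ) < d) (N : ℕ) :
    ∀ P : MvPolynomial (Fin (m + 1)) ℝ, P ≠ 0 → P.totalDegree ≤ N →
    μH[d] {z : Rn (m + 1) | MvPolynomial.eval z P = 0} = 0 := by
  induction N using Nat.strong_induction_on with
  | _ N ih =>
  intro P hP hdeg
  by_cases h : ∃ i, MvPolynomial.pderiv i P ≠ 0
  · obtain ⟨i, hi⟩ := h
    have h1 := totalDegree_pderiv_lt P i hi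
    have h2 := ih _ (lt_of_lt_of_le h1 hdeg) _ hi le_rfl
    have h3 := regular_null hd P i
    refine measure_mono_null ?_ (measure_union_null h3 h2)
    intro z hz
    by_cases hz2 : MvPolynomial.eval z (MvPolynomial.pderiv i P) = 0
    · exact Or.inr hz2
    · exact Or.inl ⟨hz, hz2⟩
  · push Not at h
    have hC : P = MvPolynomial.C (P.coeff 0) := by
      ext α
      by_cases hα : α = 0
      · simp [hα]
      · obtain ⟨i, hi⟩ := Finsupp.ne_iff.1 hα
        have := congrArg (MvPolynomial.coeff (α - Finsupp.single i 1)) (h i)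
        rw [MvPolynomial.coeff_pderiv] at this
        have e : α - Finsupp.single i 1 + Finsupp.single i 1 = α := by
          ext j
          by_cases hj : i = j
          · subst hj; simp at hi ⊢; omega
          · simp [Finsupp.single_apply, hj]
        rw [e] at this
        rw [MvPolynomial.coeff_C, if_neg (Ne.symm hα)]
        simp at this
        rcases this with h | h
        · exact h
        · exfalso; norm_cast at h
    have h0 : P.coeff 0 ≠ 0 := by
      intro h0; rw [h0] at hC; simp at hC; exact hP hC
    have : {z : Rn (m + 1) | MvPolynomial.eval z P = 0} = ∅ := by
      ext z
      rw [hC]; simp [h0]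
    rw [this]; simp



/-- growth condition -/
def Gr {n : ℕ} (d : ℝ) (K : ℝ≥0) (μ : Measure (Rn n)) : Prop :=
  ∀ z : Rn n, ∀ ρ : ℝ, 0 < ρ → ρ ≤ 1 → μ (closedBall z ρ) ≤ K * pw ρ d

lemma null_open_cover {n : ℕ} {d : ℝ} (hd : 0 < d) (Z : Set (Rn n)) (hZ : μH[d] Z = 0)
    (κ : ℝ≥0) (hκ : 0 < κ) (hκ1 : κ ≤ 1) :
    ∃ U : Set (Rn n), IsOpen U ∧ Z ⊆ U ∧ ∀ (K : ℝ≥0) (μ : Measure (Rn n)), Gr d K μ →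
      μ U ≤ K * κ := by
  have hκ2 : (0 : ℝ≥0∞) < (κ : ℝ≥0∞) / 2 := ENNReal.half_pos (by exact_mod_cast hκ.ne')
  rw [Measure.hausdorffMeasure_apply] at hZ
  have h1 : (⨅ (t : ℕ → Set (Rn n)) (_ : Z ⊆ ⋃ n, t n) (_ : ∀ n, ediam (t n) ≤ 1),
          ∑' n, ⨆ _ : (t n).Nonempty, ediam (t n) ^ d) < (κ : ℝ≥0∞) / 2 := by
    refine lt_of_le_of_lt ?_ hκ2
    rw [← hZ]
    exact le_iSup₂ (f := fun (r : ℝ≥0∞) (_ : 0 < r) =>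
      ⨅ (t : ℕ → Set (Rn n)) (_ : Z ⊆ ⋃ n, t n) (_ : ∀ n, ediam (t n) ≤ r),
          ∑' n, ⨆ _ : (t n).Nonempty, ediam (t n) ^ d) 1 one_pos
  simp only [iInf_lt_iff] at h1
  obtain ⟨t, ht, -, hsum⟩ := h1
  obtain ⟨κ', hκ'0, hκ's⟩ := ENNReal.exists_pos_sum_of_countable hκ2.ne' ℕ
  set e : ℕ → ℝ≥0∞ := fun i => ⨆ _ : (t i).Nonempty, ediam (t i) ^ d with he
  have hs : ∑' i, (e i + κ' i) ≤ κ := by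
    rw [ENNReal.tsum_add, ← ENNReal.add_halves (κ : ℝ≥0∞)]
    exact add_le_add hsum.le hκ's.le
  have hi : ∀ i, e i + κ' i ≤ 1 := fun i =>
    ((ENNReal.le_tsum i).trans hs).trans (by exact_mod_cast hκ1)
  have hit : ∀ i, e i + κ' i ≠ ⊤ := fun i => ne_top_of_le_ne_top ENNReal.one_ne_top (hi i)
  have hi0 : ∀ i, e i + κ' i ≠ 0 := fun i => by
    have := hκ'0 i
    simp only [ne_eq, add_eq_zero, not_and]
    intro _
    exact_mod_cast this.ne'
  set ρ : ℕ → ℝ := fun i => ((e i + κ' i) ^ (1 / d)).toReal with hρ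
  have hρt : ∀ i, ENNReal.ofReal (ρ i) = (e i + κ' i) ^ (1 / d) := fun i =>
    ENNReal.ofReal_toReal (ENNReal.rpow_ne_top_of_nonneg (by positivity) (hit i))
  have hρ0 : ∀ i, 0 < ρ i := fun i =>
    ENNReal.toReal_pos (by
      rw [ne_eq, ENNReal.rpow_eq_zero_iff]; simp only [hi0 i, hit i, false_and, or_self, not_false_iff])
      (ENNReal.rpow_ne_top_of_nonneg (by positivity) (hit i))
  have hρ1 : ∀ i, ρ i ≤ 1 := fun i => by
    rw [← ENNReal.ofReal_le_one, hρt]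
    exact ENNReal.rpow_le_one (hi i) (by positivity)
  have hρd : ∀ i, pw (ρ i) d = e i + κ' i := fun i => by
    unfold pw
    rw [← ENNReal.ofReal_rpow_of_pos (hρ0 i), hρt, ← ENNReal.rpow_mul, one_div_mul_cancel hd.ne',
      ENNReal.rpow_one]
  have hz : ∀ i, ∃ z : Rn n, t i ⊆ ball z (ρ i) := by
    intro i
    rcases (t i).eq_empty_or_nonempty with h | ⟨z, hz⟩
    · exact ⟨0, by simp [h]⟩
    · refine ⟨z, fun y hy => ?_⟩
      have h1 : edist y z ≤ ediam (t i) := edist_le_ediam_of_mem hy hz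
      have h2 : ediam (t i) ^ d ≤ e i := le_iSup (fun _ : (t i).Nonempty => ediam (t i) ^ d) ⟨z, hz⟩
      have h3 : ediam (t i) ^ d < e i + κ' i := by
        refine lt_of_le_of_lt h2 (ENNReal.lt_add_right ?_ ?_)
        · exact ne_top_of_le_ne_top (hit i) le_self_add
        · exact_mod_cast (hκ'0 i).ne'
      rw [← hρd i, pw, ← ENNReal.ofReal_rpow_of_pos (hρ0 i)] at h3
      have h4 := (ENNReal.rpow_lt_rpow_iff hd).1 h3
      have h5 := lt_of_le_of_lt h1 h4
      rw [edist_lt_ofReal] at h5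
      exact h5
  choose z hz using hz
  refine ⟨⋃ i, ball (z i) (ρ i), isOpen_iUnion fun i => isOpen_ball,
    ht.trans (iUnion_mono hz), fun K μ hμ => ?_⟩
  calc μ (⋃ i, ball (z i) (ρ i)) ≤ ∑' i, μ (ball (z i) (ρ i)) := measure_iUnion_le _
    _ ≤ ∑' i, K * (e i + κ' i) := by
        refine ENNReal.tsum_le_tsum fun i => ?_
        rw [← hρd i]
        exact (measure_mono ball_subset_closedBall).trans (hμ _ _ (hρ0 i) (hρ1 i))
    _ = K * ∑' i, (e i + κ' i) := ENNReal.tsum_mul_left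
    _ ≤ K * κ := by gcongr

lemma poly_cont {n : ℕ} (P : MvPolynomial (Fin n) ℝ) :
    Continuous (fun y : Rn n => MvPolynomial.eval y P) := MvPolynomial.continuous_eval P

lemma fixed_poly {m : ℕ} {d : ℝ} (hd : (m : ℝ) < d) (P : MvPolynomial (Fin (m + 1)) ℝ)
    (hP : P ≠ 0) (K c : ℝ≥0) (hc : 0 < c) :
    ∃ ε : ℝ≥0, 0 < ε ∧ ∀ μ : Measure (Rn (m + 1)), Gr d K μ → c ≤ μ (closedBall 0 1) →
      ε ≤ ∫⁻ y in closedBall 0 1, ENNReal.ofReal |MvPolynomial.eval y P| ∂μ := by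
  have hd0 : 0 < d := lt_of_le_of_lt (by positivity) hd
  have hZ := zero_null hd _ P hP le_rfl
  set κ : ℝ≥0 := min 1 (c / (2 * (K + 1))) with hκ
  have hκ0 : 0 < κ := by positivity
  have hKκ : K * κ ≤ c / 2 := by
    calc K * κ ≤ (K + 1) * (c / (2 * (K + 1))) := by
          gcongr
          · exact le_self_add
          · exact min_le_right _ _
      _ = c / 2 := by field_simp
  obtain ⟨U, hUo, hZU, hU⟩ := null_open_cover hd0 _ hZ κ hκ0 (min_le_left _ _)
  have hcomp : IsCompact (closedBall (0 : Rn (m + 1)) 1 \ U) :=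
    (isCompact_closedBall _ _).diff hUo
  obtain ⟨ε1, hε1, hε1'⟩ : ∃ ε1 : ℝ≥0, 0 < ε1 ∧ ∀ y ∈ closedBall (0 : Rn (m + 1)) 1 \ U,
      (ε1 : ℝ) ≤ |MvPolynomial.eval y P| := by
    rcases (closedBall (0 : Rn (m + 1)) 1 \ U).eq_empty_or_nonempty with h | h
    · exact ⟨1, one_pos, by simp [h]⟩
    · obtain ⟨y, hy, hmin⟩ := hcomp.exists_isMinOn h (poly_cont P).abs.continuousOn
      refine ⟨‖MvPolynomial.eval y P‖₊, ?_, fun y' hy' => hmin hy'⟩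
      exact nnnorm_pos.2 fun h0 => hy.2 (hZU h0)
  refine ⟨ε1 * (c / 2), by positivity, fun μ hμ hcμ => ?_⟩
  have h1 : (c : ℝ≥0∞) ≤ μ (closedBall 0 1 \ U) + (c / 2 : ℝ≥0) := by
    refine hcμ.trans ?_
    calc μ (closedBall 0 1) ≤ μ ((closedBall 0 1 \ U) ∪ U) := measure_mono (by
          intro y hy; by_cases h : y ∈ U <;> simp [h]; simpa using hy)
      _ ≤ μ (closedBall 0 1 \ U) + μ U := measure_union_le _ _
      _ ≤ μ (closedBall 0 1 \ U) + (c / 2 : ℝ≥0) := by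
          gcongr
          refine (hU K μ hμ).trans ?_
          exact_mod_cast hKκ
  have h2 : ((c / 2 : ℝ≥0) : ℝ≥0∞) ≤ μ (closedBall 0 1 \ U) := by
    have : (c : ℝ≥0∞) = (c / 2 : ℝ≥0) + (c / 2 : ℝ≥0) := by
      rw [← ENNReal.coe_add, add_halves]
    rw [this] at h1
    exact (ENNReal.add_le_add_iff_right ENNReal.coe_ne_top).1 h1
  calc ((ε1 * (c / 2) : ℝ≥0) : ℝ≥0∞) = ε1 * (c / 2 : ℝ≥0) := ENNReal.coe_mul _ _
    _ ≤ ε1 * μ (closedBall 0 1 \ U) := by gcongr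
    _ = ∫⁻ y in closedBall 0 1 \ U, (ε1 : ℝ≥0∞) ∂μ := by
        rw [lintegral_const, Measure.restrict_apply_univ]
    _ ≤ ∫⁻ y in closedBall 0 1 \ U, ENNReal.ofReal |MvPolynomial.eval y P| ∂μ := by
        refine setLIntegral_mono (poly_cont P).abs.measurable.ennreal_ofReal fun y hy => ?_
        have := hε1' y hy
        rw [← ENNReal.ofReal_coe_nnreal]
        exact ENNReal.ofReal_le_ofReal this
    _ ≤ _ := lintegral_mono_set sdiff_subset

/-- polynomial from coefficients -/
def Phi {n : ℕ} (I : Finset (Fin n →₀ ℕ)) (a : I → ℝ) : MvPolynomial (Fin n) ℝ :=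
  ∑ α : I, MvPolynomial.monomial α.1 (a α)

lemma Phi_sub {n : ℕ} (I : Finset (Fin n →₀ ℕ)) (a b : I → ℝ) :
    Phi I (a - b) = Phi I a - Phi I b := by
  simp [Phi]

lemma Phi_smul {n : ℕ} (I : Finset (Fin n →₀ ℕ)) (c : ℝ) (a : I → ℝ) :
    Phi I (c • a) = MvPolynomial.C c * Phi I a := by
  simp [Phi, Finset.mul_sum, MvPolynomial.C_mul_monomial]

lemma Phi_coeff {n : ℕ} (I : Finset (Fin n →₀ ℕ)) (a : I → ℝ) (β : I) :
    (Phi I a).coeff β = a β := by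
  simp only [Phi, MvPolynomial.coeff_sum, MvPolynomial.coeff_monomial]
  rw [Finset.sum_eq_single β]
  · simp
  · intro b _ hb
    rw [if_neg]; exact fun h => hb (Subtype.ext h)
  · simp

lemma Phi_surj {n : ℕ} (I : Finset (Fin n →₀ ℕ)) (P : MvPolynomial (Fin n) ℝ)
    (h : P.support ⊆ I) : Phi I (fun α => P.coeff α) = P := by
  unfold Phi
  rw [Finset.sum_coe_sort I (fun α => MvPolynomial.monomial α (P.coeff α))]
  conv_rhs => rw [P.as_sum]
  symm
  apply Finset.sum_subset h
  intro α _ hα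
  rw [MvPolynomial.notMem_support_iff.1 hα]; simp

lemma Phi_bound {n : ℕ} (I : Finset (Fin n →₀ ℕ)) : ∃ M : ℝ≥0, ∀ a : I → ℝ, ∀ y : Rn n,
    ‖y‖ ≤ 2 → |MvPolynomial.eval y (Phi I a)| ≤ M * ‖a‖ := by
  refine ⟨∑ α : I, ∏ i, 2 ^ (α.1 i), fun a y hy => ?_⟩
  simp only [Phi, map_sum, MvPolynomial.eval_monomial]
  refine (Finset.abs_sum_le_sum_abs _ _).trans ?_
  push_cast
  rw [Finset.sum_mul]
  refine Finset.sum_le_sum fun α _ => ?_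
  rw [abs_mul, mul_comm]
  refine mul_le_mul ?_ (norm_le_pi_norm a α) (abs_nonneg _) (by positivity)
  rw [Finsupp.prod_fintype _ _ (by simp), Finset.abs_prod]
  refine Finset.prod_le_prod (fun _ _ => abs_nonneg _) fun i _ => ?_
  rw [abs_pow]
  exact pow_le_pow_left₀ (abs_nonneg _) ((norm_le_pi_norm y i).trans hy) _

lemma sphere_poly {m : ℕ} {d : ℝ} (hd : (m : ℝ) < d) (I : Finset (Fin (m + 1) →₀ ℕ))
    (K c : ℝ≥0) (hc : 0 < c) :
    ∃ ε : ℝ≥0, 0 < ε ∧ ∀ a ∈ sphere (0 : I → ℝ) 1,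
      ∀ μ : Measure (Rn (m + 1)), Gr d K μ → c ≤ μ (closedBall 0 1) →
      ε ≤ ∫⁻ y in closedBall 0 1, ENNReal.ofReal |MvPolynomial.eval y (Phi I a)| ∂μ := by
  obtain ⟨M, hM⟩ := Phi_bound I
  refine (isCompact_sphere (0 : I → ℝ) 1).induction_on (p := fun s => ∃ ε : ℝ≥0, 0 < ε ∧ ∀ a ∈ s,
      ∀ μ : Measure (Rn (m + 1)), Gr d K μ → c ≤ μ (closedBall 0 1) →
      ε ≤ ∫⁻ y in closedBall 0 1, ENNReal.ofReal |MvPolynomial.eval y (Phi I a)| ∂μ) ?_ ?_ ?_ ?_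
  · exact ⟨1, one_pos, by simp⟩
  · rintro s t hst ⟨ε, h0, h⟩
    exact ⟨ε, h0, fun a ha => h a (hst ha)⟩
  · rintro s t ⟨ε, h0, h⟩ ⟨ε', h0', h'⟩
    refine ⟨min ε ε', lt_min h0 h0', ?_⟩
    rintro a (ha | ha) μ h1 h2
    · exact le_trans (by exact_mod_cast min_le_left _ _) (h a ha μ h1 h2)
    · exact le_trans (by exact_mod_cast min_le_right _ _) (h' a ha μ h1 h2)
  · intro a ha
    have hP : Phi I a ≠ 0 := by
      intro h
      have : a = 0 := by
        ext β; rw [← Phi_coeff I a β, h]; simp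
      rw [this] at ha; simp at ha
    obtain ⟨ε, hε, h⟩ := fixed_poly hd _ hP K c hc
    set ρ : ℝ≥0 := ε / (2 * ((M + 1) * (K + 1))) with hρ
    have hρ0 : 0 < ρ := by positivity
    have hMK : M * ρ * K ≤ ε / 2 := by
      calc M * ρ * K ≤ (M + 1) * ρ * (K + 1) := by
            gcongr <;> exact le_self_add
        _ = ε / 2 := by rw [hρ]; field_simp
    refine ⟨ball a ρ, mem_nhdsWithin_of_mem_nhds (ball_mem_nhds a (by exact_mod_cast hρ0)),
      ε / 2, by positivity, fun b hb μ hμ hcμ => ?_⟩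
    have h1 := h μ hμ hcμ
    have hmeas : ∀ P : MvPolynomial (Fin (m + 1)) ℝ,
      Measurable fun y : Rn (m + 1) => ENNReal.ofReal |MvPolynomial.eval y P| :=
      fun P => (poly_cont P).abs.measurable.ennreal_ofReal
    have h2 : ∫⁻ y in closedBall 0 1, ENNReal.ofReal |MvPolynomial.eval y (Phi I a)| ∂μ ≤
        (∫⁻ y in closedBall 0 1, ENNReal.ofReal |MvPolynomial.eval y (Phi I b)| ∂μ) +
        ((ε / 2 : ℝ≥0) : ℝ≥0∞) := by
      calc ∫⁻ y in closedBall 0 1, ENNReal.ofReal |MvPolynomial.eval y (Phi I a)| ∂μ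
          ≤ ∫⁻ y in closedBall 0 1, (ENNReal.ofReal |MvPolynomial.eval y (Phi I b)| +
              ((M * ρ : ℝ≥0) : ℝ≥0∞)) ∂μ := by
            refine setLIntegral_mono ((hmeas _).add_const _) fun y hy => ?_
            rw [← ENNReal.ofReal_coe_nnreal, ← ENNReal.ofReal_add (abs_nonneg _) (by positivity)]
            apply ENNReal.ofReal_le_ofReal
            have hy' : ‖y‖ ≤ 2 := by
              have : ‖y‖ ≤ 1 := by simpa using hy
              linarith
            have h3 := hM (a - b) y hy'
            rw [Phi_sub, map_sub] at h3
            have h4 : ‖a - b‖ ≤ ρ := by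
              rw [← dist_eq_norm, dist_comm]; exact (mem_ball.1 hb).le
            have h5 : (M : ℝ) * ‖a - b‖ ≤ M * ρ := by gcongr
            have h6 := abs_sub_abs_le_abs_sub (MvPolynomial.eval y (Phi I a))
              (MvPolynomial.eval y (Phi I b))
            push_cast
            linarith
        _ = (∫⁻ y in closedBall 0 1, ENNReal.ofReal |MvPolynomial.eval y (Phi I b)| ∂μ) +
              ((M * ρ : ℝ≥0) : ℝ≥0∞) * μ (closedBall 0 1) := by
            rw [lintegral_add_left (hmeas _), lintegral_const, Measure.restrict_apply_univ]
        _ ≤ _ := by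
            gcongr
            have := hμ 0 1 one_pos le_rfl
            simp only [pw, Real.one_rpow, ENNReal.ofReal_one, mul_one] at this
            calc ((M * ρ : ℝ≥0) : ℝ≥0∞) * μ (closedBall 0 1) ≤ ((M * ρ : ℝ≥0) : ℝ≥0∞) * K := by gcongr
              _ ≤ _ := by exact_mod_cast hMK
    have h3 := h1.trans h2
    have : (ε : ℝ≥0∞) = (ε / 2 : ℝ≥0) + (ε / 2 : ℝ≥0) := by
      rw [← ENNReal.coe_add, add_halves]
    rw [this] at h3
    exact (ENNReal.add_le_add_iff_right ENNReal.coe_ne_top).1 h3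

lemma unit_markov {m : ℕ} {d : ℝ} (hd : (m : ℝ) < d) (N : ℕ) (K c : ℝ≥0) (hc : 0 < c) :
    ∃ A : ℝ≥0, ∀ P : MvPolynomial (Fin (m + 1)) ℝ, P.totalDegree ≤ N →
      ∀ μ : Measure (Rn (m + 1)), Gr d K μ → c ≤ μ (closedBall 0 1) → ∀ y, ‖y‖ ≤ 2 →
      ENNReal.ofReal |MvPolynomial.eval y P| ≤
        A * ∫⁻ y in closedBall 0 1, ENNReal.ofReal |MvPolynomial.eval y P| ∂μ := by
  set I : Finset (Fin (m + 1) →₀ ℕ) := Finset.Iic (Finsupp.equivFunOnFinite.symm fun _ => N) with hI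
  obtain ⟨M, hM⟩ := Phi_bound I
  obtain ⟨ε, hε, h⟩ := sphere_poly hd I K c hc
  refine ⟨M / ε, fun P hP μ hμ hcμ y hy => ?_⟩
  have hsupp : P.support ⊆ I := by
    intro α hα
    rw [hI, Finset.mem_Iic]
    intro i
    have h1 := MvPolynomial.le_totalDegree hα
    have h2 : α i ≤ α.sum fun _ e => e := by
      rw [Finsupp.sum_fintype _ _ (by simp)]
      exact Finset.single_le_sum (f := fun i => α i) (fun _ _ => Nat.zero_le _) (Finset.mem_univ i)
    simp
    omega
  obtain ⟨a, rfl⟩ : ∃ a, Phi I a = P := ⟨_, Phi_surj I P hsupp⟩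
  rcases eq_or_ne a 0 with rfl | ha
  · simp [Phi]
  have hna : 0 < ‖a‖ := norm_pos_iff.2 ha
  have h1 := h (‖a‖⁻¹ • a) (by simp [norm_smul, hna.ne']) μ hμ hcμ
  have h2 : ∀ y, ENNReal.ofReal |MvPolynomial.eval y (Phi I (‖a‖⁻¹ • a))| =
      ENNReal.ofReal ‖a‖⁻¹ * ENNReal.ofReal |MvPolynomial.eval y (Phi I a)| := by
    intro y
    rw [Phi_smul, ← ENNReal.ofReal_mul (by positivity)]
    simp [abs_mul]
  simp only [h2] at h1
  rw [lintegral_const_mul _ (poly_cont _).abs.measurable.ennreal_ofReal] at h1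
  have h3 : ENNReal.ofReal ‖a‖ * ε ≤
      ∫⁻ y in closedBall 0 1, ENNReal.ofReal |MvPolynomial.eval y (Phi I a)| ∂μ := by
    calc ENNReal.ofReal ‖a‖ * ε ≤ ENNReal.ofReal ‖a‖ * (ENNReal.ofReal ‖a‖⁻¹ * _) := by gcongr
      _ = _ := by
        rw [← mul_assoc, ← ENNReal.ofReal_mul hna.le, mul_inv_cancel₀ hna.ne', ENNReal.ofReal_one,
          one_mul]
  calc ENNReal.ofReal |MvPolynomial.eval y (Phi I a)| ≤ ENNReal.ofReal (M * ‖a‖) :=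
        ENNReal.ofReal_le_ofReal (hM a y hy)
    _ = ((M / ε : ℝ≥0) : ℝ≥0∞) * (ENNReal.ofReal ‖a‖ * ε) := by
        rw [ENNReal.ofReal_mul (by positivity), ENNReal.ofReal_coe_nnreal, ENNReal.coe_div hε.ne',
          mul_comm (ENNReal.ofReal ‖a‖), ← mul_assoc, ENNReal.div_mul_cancel]
        · exact_mod_cast hε.ne'
        · exact ENNReal.coe_ne_top
    _ ≤ _ := by gcongr

/-- affine substitution -/
def affSub {n : ℕ} (w : Rn n) (t : ℝ) (P : MvPolynomial (Fin n) ℝ) : MvPolynomial (Fin n) ℝ :=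
  MvPolynomial.bind₁ (fun i => MvPolynomial.C (w i) + MvPolynomial.C t * MvPolynomial.X i) P

lemma affSub_eval {n : ℕ} (w : Rn n) (t : ℝ) (P : MvPolynomial (Fin n) ℝ) (y : Rn n) :
    MvPolynomial.eval y (affSub w t P) = MvPolynomial.eval (w + t • y) P := by
  unfold affSub
  induction P using MvPolynomial.induction_on with
  | C a => simp
  | add P Q hP hQ => simp [hP, hQ]
  | mul_X P j hP => simp [hP]

lemma affSub_deg {n : ℕ} (w : Rn n) (t : ℝ) (P : MvPolynomial (Fin n) ℝ) :
    (affSub w t P).totalDegree ≤ P.totalDegree := by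
  unfold affSub
  conv_lhs => rw [P.as_sum]
  rw [map_sum]
  refine MvPolynomial.totalDegree_finsetSum_le fun α hα => ?_
  rw [MvPolynomial.bind₁_monomial]
  refine (MvPolynomial.totalDegree_mul _ _).trans ?_
  rw [MvPolynomial.totalDegree_C, zero_add]
  refine le_trans ?_ (MvPolynomial.le_totalDegree hα)
  refine (MvPolynomial.totalDegree_finsetProd _ _).trans ?_
  refine Finset.sum_le_sum fun i _ => ?_
  refine (MvPolynomial.totalDegree_pow _ _).trans ?_
  have : (MvPolynomial.C (w i) + MvPolynomial.C t * MvPolynomial.X i :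
      MvPolynomial (Fin n) ℝ).totalDegree ≤ 1 := by
    refine (MvPolynomial.totalDegree_add _ _).trans (max_le (by simp) ?_)
    refine (MvPolynomial.totalDegree_mul _ _).trans ?_
    simp
  calc _ ≤ α i * 1 := Nat.mul_le_mul_left _ this
    _ = _ := mul_one _



lemma ofReal_const_mul_pw {C r d : ℝ} (hC : 0 ≤ C) :
    ENNReal.ofReal (C * r ^ d) = (C.toNNReal : ℝ≥0∞) * pw r d := by
  rw [ENNReal.ofReal_mul hC]; rfl

lemma dset_upper {n : ℕ} {S : Set (Rn n)} {d C₀ : ℝ} (hS : IsDSet S d C₀) (hd : 0 < d) :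
    ∃ K : ℝ≥0, ∀ z : Rn n, ∀ r : ℝ, 0 < r → r ≤ 1 / 2 →
      μH[d] (closedBall z r ∩ S) ≤ K * pw r d := by
  refine ⟨C₀.toNNReal * ((2 : ℝ) ^ d).toNNReal, fun z r hr hr2 => ?_⟩
  rcases (closedBall z r ∩ S).eq_empty_or_nonempty with h | ⟨w, hw, hwS⟩
  · rw [h]; simp
  · have h1 := (hS.2.2 w hwS (2 * r) (by linarith) (by linarith)).2
    calc μH[d] (closedBall z r ∩ S) ≤ μH[d] (closedBall w (2 * r) ∩ S) := by
          apply measure_mono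
          apply inter_subset_inter_left
          apply closedBall_subset_closedBall'
          rw [dist_comm]; have := mem_closedBall.1 hw; linarith
      _ ≤ _ := h1
      _ = _ := by
        rw [ofReal_const_mul_pw (by linarith [hS.2.1]), pw_mul_base (by norm_num) hr.le,
          ENNReal.coe_mul, mul_assoc]; rfl

lemma dset_lower {n : ℕ} {S : Set (Rn n)} {d C₀ : ℝ} (hS : IsDSet S d C₀) :
    ∃ K : ℝ≥0, 0 < K ∧ ∀ w ∈ S, ∀ r : ℝ, 0 < r → r ≤ 1 →
      pw r d ≤ K * μH[d] (closedBall w r ∩ S) := by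
  have hC : 0 < C₀ := by linarith [hS.2.1]
  refine ⟨C₀.toNNReal, Real.toNNReal_pos.2 hC, fun w hw r hr hr1 => ?_⟩
  have h1 := (hS.2.2 w hw r hr hr1).1
  calc pw r d = C₀.toNNReal * ENNReal.ofReal (C₀⁻¹ * r ^ d) := by
        rw [← ENNReal.ofReal, ← ENNReal.ofReal_mul hC.le, ← mul_assoc, mul_inv_cancel₀ hC.ne',
          one_mul]; rfl
    _ ≤ _ := by gcongr

lemma dset_markov {n : ℕ} (hn : 2 ≤ n) {S : Set (Rn n)} {d C₀ : ℝ} (hS : IsDSet S d C₀)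
    (hd1 : (n : ℝ) - 1 < d) (N : ℕ) :
    ∃ A : ℝ≥0, ∀ w ∈ S, ∀ t : ℝ, 0 < t → t ≤ 1 / 2 → ∀ P : MvPolynomial (Fin n) ℝ,
      P.totalDegree ≤ N → ∀ y ∈ closedBall w (2 * t),
      ENNReal.ofReal |MvPolynomial.eval y P| ≤ A * (pw t (-d) *
        ∫⁻ z in closedBall w t ∩ S, ENNReal.ofReal |MvPolynomial.eval z P| ∂μH[d]) := by
  obtain ⟨m, rfl⟩ : ∃ m, n = m + 1 := ⟨n - 1, by omega⟩
  have hd : (m : ℝ) < d := by push_cast at hd1; linarith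
  have hd0 : 0 < d := lt_of_le_of_lt (by positivity) hd
  obtain ⟨K, hK⟩ := dset_upper hS hd0
  obtain ⟨K', hK'0, hK'⟩ := dset_lower hS
  obtain ⟨A, hA⟩ := unit_markov hd N K K'⁻¹ (by positivity)
  refine ⟨A, fun w hw t ht ht2 P hP y hy => ?_⟩
  set φ : Rn (m + 1) → Rn (m + 1) := fun y => t⁻¹ • (y - w) with hφ
  have hφm : Measurable φ := by fun_prop
  set ν := (μH[d] : Measure (Rn (m + 1))).restrict (closedBall w t ∩ S) with hν
  set μ := pw t (-d) • ν.map φ with hμ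
  have hpre : ∀ z ρ, φ ⁻¹' closedBall z ρ = closedBall (w + t • z) (t * ρ) := by
    intro z ρ
    ext y
    simp only [hφ, mem_preimage, mem_closedBall, dist_eq_norm]
    have : t⁻¹ • (y - w) - z = t⁻¹ • (y - (w + t • z)) := by
      rw [← sub_sub, smul_sub t⁻¹ (y - w), smul_smul, inv_mul_cancel₀ ht.ne', one_smul]
    rw [this, norm_smul, norm_inv, Real.norm_of_nonneg ht.le, inv_mul_le_iff₀ ht]
  have hφeq : ∀ y, w + t • φ y = y := by
    intro y; simp [hφ, smul_smul, mul_inv_cancel₀ ht.ne']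
  have hGr : Gr d K μ := by
    intro z ρ hρ hρ1
    rw [hμ, Measure.smul_apply, Measure.map_apply hφm measurableSet_closedBall, hpre, smul_eq_mul,
      hν, Measure.restrict_apply measurableSet_closedBall]
    calc _ ≤ pw t (-d) * μH[d] (closedBall (w + t • z) (t * ρ) ∩ S) := by
          gcongr
          exact inter_subset_right
      _ ≤ pw t (-d) * (K * pw (t * ρ) d) := by
          gcongr
          exact hK _ _ (by positivity) (by nlinarith)
      _ = K * pw ρ d * (pw t (-d) * pw t d) := by
          rw [pw_mul_base ht.le hρ.le]; ring
      _ = K * pw ρ d := by rw [← pw_add ht, neg_add_cancel, pw_zero, mul_one]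
  have hlow : ((K'⁻¹ : ℝ≥0) : ℝ≥0∞) ≤ μ (closedBall 0 1) := by
    rw [hμ, Measure.smul_apply, Measure.map_apply hφm measurableSet_closedBall, hpre, smul_eq_mul,
      hν, Measure.restrict_apply measurableSet_closedBall, smul_zero, add_zero, mul_one,
      ← inter_assoc, inter_self, ENNReal.coe_inv hK'0.ne', ENNReal.inv_le_iff_le_mul]
    · calc (1 : ℝ≥0∞) = pw t (-d) * pw t d := by rw [← pw_add ht, neg_add_cancel, pw_zero]
        _ ≤ pw t (-d) * (K' * μH[d] (closedBall w t ∩ S)) := by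
            gcongr
            exact hK' w hw t ht (by linarith)
        _ = _ := by ring
    · intro _; exact_mod_cast hK'0.ne'
    · intro h; exact absurd h ENNReal.coe_ne_top
  have h1 := hA (affSub w t P) ((affSub_deg w t P).trans hP) μ hGr hlow (φ y) (by
    have : y ∈ φ ⁻¹' closedBall 0 2 := by rw [hpre]; simpa [mul_comm] using hy
    simpa using this)
  rw [affSub_eval, hφeq] at h1
  refine h1.trans ?_
  gcongr
  rw [hμ, Measure.restrict_smul, lintegral_smul_measure, smul_eq_mul]
  refine mul_le_mul' le_rfl ?_
  rw [setLIntegral_map measurableSet_closedBall (poly_cont _).abs.measurable.ennreal_ofReal hφm]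
  simp only [affSub_eval, hφeq]
  exact lintegral_mono' Measure.restrict_le_self le_rfl

lemma fub {n : ℕ} (ν lam : Measure (Rn n)) [SFinite ν] [SFinite lam] {H : Rn n → ℝ≥0∞}
    (hH : Measurable H) (r : ℝ) :
    ∫⁻ z, ∫⁻ y in closedBall z r, H y ∂lam ∂ν = ∫⁻ y, H y * ν (closedBall y r) ∂lam := by
  have hset : MeasurableSet {p : Rn n × Rn n | dist p.2 p.1 ≤ r} :=
    measurableSet_le (by fun_prop) measurable_const
  have e1 : ∀ z, ∫⁻ y in closedBall z r, H y ∂lam =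
      ∫⁻ y, {p : Rn n × Rn n | dist p.2 p.1 ≤ r}.indicator (fun p => H p.2) (z, y) ∂lam := by
    intro z
    rw [← lintegral_indicator measurableSet_closedBall]
    rfl
  simp only [e1]
  rw [lintegral_lintegral_swap]
  · congr 1; ext y
    have : ∀ z, {p : Rn n × Rn n | dist p.2 p.1 ≤ r}.indicator (fun p => H p.2) (z, y) =
      (closedBall y r).indicator (fun _ => H y) z := by
      intro z
      simp only [indicator, mem_setOf_eq, mem_closedBall, dist_comm]
    simp only [this]
    rw [lintegral_indicator measurableSet_closedBall, lintegral_const, Measure.restrict_apply_univ]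
  · exact ((hH.comp measurable_snd).indicator hset).aemeasurable

lemma dset_null {n : ℕ} {S : Set (Rn n)} {d C₀ : ℝ} (hS : IsDSet S d C₀) (hd2 : d < n) :
    volume S = 0 := by
  apply measure_null_of_locally_null
  intro w hw
  refine ⟨closedBall w 1 ∩ S, inter_mem (mem_nhdsWithin_of_mem_nhds (closedBall_mem_nhds w one_pos))
    self_mem_nhdsWithin, ?_⟩
  have h1 := (hS.2.2 w hw 1 one_pos le_rfl).2
  rw [← hausdorffMeasure_pi_real, Fintype.card_fin]
  rcases Measure.hausdorffMeasure_zero_or_top hd2 (closedBall w 1 ∩ S) with h | h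
  · exact h
  · rw [h] at h1
    exact absurd h1 (by simp)

lemma near_pt {n : ℕ} {S : Set (Rn n)} (hc : IsClosed S) (hne : S.Nonempty) (y : Rn n) {ρ : ℝ}
    (h : infDist y S ≤ ρ) : ∃ w ∈ S, dist y w ≤ ρ := by
  obtain ⟨w, hw, he⟩ := hc.exists_infDist_eq_dist hne y
  exact ⟨w, hw, he ▸ h⟩

lemma dset_vol {n : ℕ} {S : Set (Rn n)} {d C₀ : ℝ} (hS : IsDSet S d C₀) (hne : S.Nonempty)
    (hd : 0 < d) :
    ∃ K : ℝ≥0, ∀ z : Rn n, ∀ R ρ : ℝ, 0 < ρ → ρ ≤ R → R ≤ 1 / 8 →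
      volume (closedBall z R ∩ {y | infDist y S ≤ ρ}) ≤ K * (pw ρ (n - d) * pw R d) := by
  obtain ⟨K, hK⟩ := dset_upper hS hd
  obtain ⟨K', hK'0, hK'⟩ := dset_lower hS
  refine ⟨K' * (2 ^ n * (2 ^ n * (K * ((3 : ℝ) ^ d).toNNReal))), fun z R ρ hρ hρR hR => ?_⟩
  have hR0 : 0 < R := hρ.trans_le hρR
  set ν := (μH[d] : Measure (Rn n)).restrict (closedBall z (3 * R) ∩ S) with hν
  have hνu : ν univ ≤ K * pw (3 * R) d := by
    rw [hν, Measure.restrict_apply_univ]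
    exact hK z (3 * R) (by positivity) (by linarith)
  have : IsFiniteMeasure ν := ⟨lt_of_le_of_lt hνu
    (ENNReal.mul_lt_top ENNReal.coe_lt_top (pw_ne_top _ _).lt_top)⟩
  have hm : MeasurableSet (closedBall z R ∩ {y | infDist y S ≤ ρ}) :=
    measurableSet_closedBall.inter (measurableSet_le measurable_infDist measurable_const)
  have h1 : pw ρ d * volume (closedBall z R ∩ {y | infDist y S ≤ ρ}) ≤
      K' * (2 ^ n * pw (2 * ρ) n * (K * pw (3 * R) d)) := by
    calc pw ρ d * volume (closedBall z R ∩ {y | infDist y S ≤ ρ})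
        = ∫⁻ y in closedBall z R ∩ {y | infDist y S ≤ ρ}, pw ρ d := by
          rw [lintegral_const, Measure.restrict_apply_univ]
      _ ≤ ∫⁻ y in closedBall z R ∩ {y | infDist y S ≤ ρ}, K' * ν (closedBall y (2 * ρ)) := by
          refine setLIntegral_mono' hm fun y hy => ?_
          obtain ⟨w, hw, hyw⟩ := near_pt hS.1 hne y hy.2
          refine (hK' w hw ρ hρ (by linarith)).trans ?_
          refine mul_le_mul' le_rfl ?_
          rw [hν, Measure.restrict_apply measurableSet_closedBall]
          apply measure_mono
          rintro v ⟨hv, hvS⟩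
          rw [mem_closedBall] at hv
          have h0 : dist y z ≤ R := hy.1
          have h2 : dist v y ≤ 2 * ρ := by
            have := dist_triangle v w y
            rw [dist_comm w y] at this
            linarith
          refine ⟨h2, ?_, hvS⟩
          rw [mem_closedBall]
          have := dist_triangle v y z
          linarith
      _ ≤ ∫⁻ y, K' * ν (closedBall y (2 * ρ)) := setLIntegral_le_lintegral _ _
      _ = K' * ∫⁻ y, ν (closedBall y (2 * ρ)) := by
          rw [lintegral_const_mul' _ _ ENNReal.coe_ne_top]
      _ = K' * ∫⁻ v, ∫⁻ y in closedBall v (2 * ρ), 1 ∂volume ∂ν := by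
          rw [fub ν volume measurable_const]; simp
      _ = K' * ∫⁻ v, 2 ^ n * pw (2 * ρ) n ∂ν := by
          congr 1
          apply lintegral_congr
          intro v
          rw [lintegral_const, Measure.restrict_apply_univ, one_mul, vol_cb v (by positivity)]
      _ ≤ _ := by
          rw [lintegral_const]
          gcongr
  calc volume (closedBall z R ∩ {y | infDist y S ≤ ρ})
      = pw ρ (-d) * (pw ρ d * volume (closedBall z R ∩ {y | infDist y S ≤ ρ})) := by
        rw [← mul_assoc, ← pw_add hρ, neg_add_cancel, pw_zero, one_mul]
    _ ≤ pw ρ (-d) * (K' * (2 ^ n * pw (2 * ρ) n * (K * pw (3 * R) d))) := by gcongr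
    _ = _ := by
        rw [pw_mul_base (by norm_num) hρ.le, pw_mul_base (by norm_num) hR0.le, sub_eq_neg_add,
          pw_add hρ]
        have e1 : pw 2 n = 2 ^ n := by
          simp [pw, ENNReal.ofReal_pow]
        have e2 : pw 3 d = (((3 : ℝ) ^ d).toNNReal : ℝ≥0∞) := rfl
        rw [e1, e2]
        push_cast
        ring

lemma dset_int {n : ℕ} {S : Set (Rn n)} {d C₀ : ℝ} (hS : IsDSet S d C₀) (hne : S.Nonempty)
    (hd : 0 < d) (hd2 : d < n) (τ : ℝ) (hτ : τ < n - d) :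
    ∃ K : ℝ≥0, ∀ z : Rn n, ∀ R : ℝ, 0 < R → R ≤ 1 / 64 → infDist z S ≤ 2 * R →
      ∫⁻ y in closedBall z R, pw (infDist y S) (-τ) ≤ K * pw R (n - τ) := by
  obtain ⟨K, hK⟩ := dset_vol hS hne hd
  obtain ⟨K1, hK1⟩ := lint_low (-τ)
  refine ⟨K1 * (K * ((n - d - τ)⁻¹.toNNReal * ((6 : ℝ) ^ ((n : ℝ) - τ)).toNNReal)),
    fun z R hR hR2 hz => ?_⟩
  have hpos : 0 < (n : ℝ) - d - τ := by linarith
  have hnull := dset_null hS hd2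
  have hae : ∀ᵐ y : Rn n, 0 < infDist y S := by
    have : ∀ᵐ y : Rn n, y ∉ S := measure_eq_zero_iff_ae_notMem.1 hnull
    filter_upwards [this] with y hy
    exact (hS.1.notMem_iff_infDist_pos hne).1 hy
  have hset : MeasurableSet {p : Rn n × ℝ | infDist p.1 S ≤ p.2} :=
    measurableSet_le (measurable_infDist.comp measurable_fst) measurable_snd
  set F : Rn n → ℝ → ℝ≥0∞ := fun y u =>
    {p : Rn n × ℝ | infDist p.1 S ≤ p.2}.indicator (fun p => pw p.2 (-τ - 1)) (y, u) with hF
  have hFm : Measurable (Function.uncurry F) :=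
    ((measurable_pw _).comp measurable_snd).indicator hset
  calc ∫⁻ y in closedBall z R, pw (infDist y S) (-τ)
      ≤ ∫⁻ y in closedBall z R, K1 * ∫⁻ u in Ioc 0 (6 * R), F y u := by
        apply lintegral_mono_ae
        filter_upwards [ae_restrict_of_ae hae, self_mem_ae_restrict measurableSet_closedBall]
          with y hy hyz
        refine (hK1 _ hy).trans ?_
        refine mul_le_mul' le_rfl ?_
        have hy3 : infDist y S ≤ 3 * R := by
          have := infDist_le_infDist_add_dist (s := S) (x := y) (y := z)
          have h4 : dist y z ≤ R := hyz
          linarith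
        calc ∫⁻ u in Ioo (infDist y S) (2 * infDist y S), pw u (-τ - 1)
            ≤ ∫⁻ u in Ioo (infDist y S) (2 * infDist y S), F y u := by
              refine setLIntegral_mono' measurableSet_Ioo fun u hu => ?_
              have : infDist y S ≤ u := hu.1.le
              simp [hF, indicator, this]
          _ ≤ _ := by
              apply lintegral_mono_set
              intro u hu
              exact ⟨hy.trans hu.1, by linarith [hu.2]⟩
    _ = K1 * ∫⁻ u in Ioc 0 (6 * R), ∫⁻ y in closedBall z R, F y u := by
        rw [lintegral_const_mul' _ _ ENNReal.coe_ne_top, lintegral_lintegral_swap hFm.aemeasurable]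
    _ ≤ K1 * ∫⁻ u in Ioc 0 (6 * R), K * pw (6 * R) d * pw u ((n - d - τ) - 1) := by
        refine mul_le_mul' le_rfl ?_
        refine setLIntegral_mono ((measurable_pw _).const_mul _) fun u hu => ?_
        have e : ∀ y, F y u = {y | infDist y S ≤ u}.indicator (fun _ => pw u (-τ - 1)) y := by
          intro y; simp [hF, indicator]
        have hms : MeasurableSet {y : Rn n | infDist y S ≤ u} :=
          measurableSet_le measurable_infDist measurable_const
        simp only [e]
        rw [lintegral_indicator hms, lintegral_const, Measure.restrict_restrict hms,
          Measure.restrict_apply_univ]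
        calc pw u (-τ - 1) * volume ({y | infDist y S ≤ u} ∩ closedBall z R)
            ≤ pw u (-τ - 1) * volume (closedBall z (6 * R) ∩ {y | infDist y S ≤ u}) := by
              refine mul_le_mul' le_rfl (measure_mono ?_)
              rw [inter_comm]
              exact inter_subset_inter_left _ (closedBall_subset_closedBall (by linarith))
          _ ≤ pw u (-τ - 1) * (K * (pw u (n - d) * pw (6 * R) d)) := by
              gcongr
              exact hK z (6 * R) u hu.1 hu.2 (by linarith)
          _ = K * pw (6 * R) d * (pw u (n - d) * pw u (-τ - 1)) := by ring
          _ = _ := by rw [← pw_add hu.1]; congr 2; ring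
    _ ≤ K1 * (K * pw (6 * R) d * ((n - d - τ)⁻¹.toNNReal * pw (6 * R) (n - d - τ))) := by
        rw [lintegral_const_mul _ (measurable_pw _)]
        gcongr
        exact lint_Ioc hpos (by positivity)
    _ = K1 * (K * ((n - d - τ)⁻¹.toNNReal * (pw (6 * R) d * pw (6 * R) (n - d - τ)))) := by ring
    _ = _ := by
        rw [← pw_add (by positivity), pw_mul_base (by norm_num) hR.le]
        have e2 : d + ((n : ℝ) - d - τ) = n - τ := by ring
        rw [e2]
        have e3 : pw 6 (n - τ) = (((6 : ℝ) ^ ((n : ℝ) - τ)).toNNReal : ℝ≥0∞) := rfl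
        rw [e3]
        push_cast
        ring

lemma dset_porous {n : ℕ} {S : Set (Rn n)} {d C₀ : ℝ} (hS : IsDSet S d C₀) (hne : S.Nonempty)
    (hd : 0 < d) (hd2 : d < n) :
    ∃ κ : ℝ, 0 < κ ∧ κ ≤ 1 ∧ ∀ z : Rn n, ∀ R : ℝ, 0 < R → R ≤ 1 / 8 →
      volume (closedBall z R) ≤ 2 * volume (closedBall z R ∩ {y | κ * R < infDist y S}) := by
  obtain ⟨K, hK⟩ := dset_vol hS hne hd
  set a := (n : ℝ) - d with ha
  have ha0 : 0 < a := by linarith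
  set b : ℝ := 1 / (2 * (K + 1)) with hb
  have hb0 : 0 < b := by positivity
  have hb1 : b ≤ 1 := by
    rw [hb, div_le_one (by positivity)]; have := K.coe_nonneg; linarith
  have hKb : K * b ≤ 1 / 2 := by
    rw [hb, mul_one_div, div_le_div_iff₀ (by positivity) (by norm_num)]; have := K.coe_nonneg; linarith
  refine ⟨b ^ (1 / a), by positivity, Real.rpow_le_one hb0.le hb1 (by positivity),
    fun z R hR hR8 => ?_⟩
  set κ := b ^ (1 / a) with hκ
  have hκ0 : 0 < κ := by positivity
  have hκ1 : κ ≤ 1 := Real.rpow_le_one hb0.le hb1 (by positivity)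
  have hκa : κ ^ a = b := by rw [hκ, ← Real.rpow_mul hb0.le, one_div_mul_cancel ha0.ne', Real.rpow_one]
  have h1 := hK z R (κ * R) (by positivity) (by nlinarith) hR8
  have h2 : volume (closedBall z R ∩ {y | infDist y S ≤ κ * R}) ≤ volume (closedBall z R) / 2 := by
    refine h1.trans ?_
    rw [pw_mul_base hκ0.le hR.le, vol_cb z hR, mul_assoc (pw κ _), ← pw_add hR,
      sub_add_cancel, ← mul_assoc, ENNReal.div_eq_inv_mul, ← mul_assoc]
    refine mul_le_mul' ?_ le_rfl
    have hpk : pw κ (n - d) = ENNReal.ofReal b := by unfold pw; rw [← ha, hκa]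
    rw [hpk, ← ENNReal.ofReal_coe_nnreal, ← ENNReal.ofReal_mul (by positivity)]
    calc ENNReal.ofReal (K * b) ≤ ENNReal.ofReal (1 / 2) := ENNReal.ofReal_le_ofReal hKb
      _ = 2⁻¹ * 1 := by rw [one_div, ENNReal.ofReal_inv_of_pos two_pos]; simp
      _ ≤ _ := by gcongr; exact one_le_pow₀ (by norm_num)
  have h3 : volume (closedBall z R) ≤ volume (closedBall z R) / 2 +
      volume (closedBall z R ∩ {y | κ * R < infDist y S}) := by
    calc volume (closedBall z R) ≤ volume ((closedBall z R ∩ {y | infDist y S ≤ κ * R}) ∪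
          (closedBall z R ∩ {y | κ * R < infDist y S})) := by
          apply measure_mono
          intro y hy
          rcases le_or_gt (infDist y S) (κ * R) with h | h
          · exact Or.inl ⟨hy, h⟩
          · exact Or.inr ⟨hy, h⟩
      _ ≤ _ := (measure_union_le _ _).trans (by gcongr)
  have h4 : volume (closedBall z R) / 2 ≤ volume (closedBall z R ∩ {y | κ * R < infDist y S}) := by
    have ht : volume (closedBall z R) / 2 ≠ ⊤ := ENNReal.div_ne_top (vol_cb_ne_top z R) (by norm_num)
    conv_lhs at h3 => rw [← ENNReal.add_halves (volume (closedBall z R))]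
    exact (ENNReal.add_le_add_iff_left ht).1 h3
  calc volume (closedBall z R) = 2 * (volume (closedBall z R) / 2) := by
        rw [ENNReal.mul_div_cancel (by norm_num) (by norm_num)]
    _ ≤ _ := by gcongr



def Av {n : ℕ} (f : Rn n → ℝ) (x : Rn n) (r : ℝ) : ℝ≥0∞ :=
  (volume (closedBall x r))⁻¹ * ∫⁻ y in closedBall x r, ENNReal.ofReal |f y|

def Eap {n : ℕ} (N : ℕ) (f : Rn n → ℝ) (x : Rn n) (r : ℝ) : ℝ≥0∞ :=
  ⨅ (P : MvPolynomial (Fin n) ℝ) (_ : P.totalDegree ≤ N),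
    Av (fun y => f y - MvPolynomial.eval y P) x r

lemma localApprox_eq {n : ℕ} (N : ℕ) (f : Rn n → ℝ) (x : Rn n) (r : ℝ) :
    localApprox (N + 1) 1 f x r = Eap N f x r := by
  simp [localApprox, Eap, Av]

lemma Av_mono {n : ℕ} (f : Rn n → ℝ) {z y : Rn n} {r τ M : ℝ} (hr : 0 < r) (hτ : 0 < τ)
    (hM : 0 ≤ M) (hτM : τ ≤ M * r) (hsub : closedBall z r ⊆ closedBall y τ) :
    Av f z r ≤ pw M n * Av f y τ := by
  unfold Av
  rw [← mul_assoc]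
  refine mul_le_mul' ?_ (lintegral_mono_set hsub)
  rw [ENNReal.inv_le_iff_le_mul (fun _ => vol_cb_ne_zero z hr)
    (fun h => absurd h (vol_cb_ne_top z r))]
  calc (1 : ℝ≥0∞) = volume (closedBall y τ) * (volume (closedBall y τ))⁻¹ :=
        (ENNReal.mul_inv_cancel (vol_cb_ne_zero y hτ) (vol_cb_ne_top y τ)).symm
    _ ≤ (pw M n * volume (closedBall z r)) * (volume (closedBall y τ))⁻¹ := by
        refine mul_le_mul' ?_ le_rfl
        rw [vol_cb y hτ, vol_cb z hr, mul_left_comm, ← pw_mul_base hM hr.le]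
        refine mul_le_mul' le_rfl (pw_mono hτ.le hτM (by positivity))
    _ = _ := by ring

lemma le_Eap {n : ℕ} (N : ℕ) (f : Rn n → ℝ) {z : Rn n} {r : ℝ} {a b c : ℝ≥0∞} (hc : c ≠ ⊤)
    (h : ∀ P : MvPolynomial (Fin n) ℝ, P.totalDegree ≤ N →
      a ≤ c * Av (fun y => f y - MvPolynomial.eval y P) z r + b) :
    a ≤ c * Eap N f z r + b := by
  rcases eq_or_ne c 0 with rfl | hc0
  · have := h 0 (by simp)
    simpa using this
  · unfold Eap
    rw [ENNReal.mul_iInf_of_ne hc0 hc, ENNReal.iInf_add]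
    refine le_iInf fun P => ?_
    rw [ENNReal.mul_iInf_of_ne hc0 hc, ENNReal.iInf_add]
    exact le_iInf fun hP => h P hP

lemma Eap_mono {n : ℕ} (N : ℕ) (f : Rn n → ℝ) {z y : Rn n} {r τ M : ℝ} (hr : 0 < r) (hτ : 0 < τ)
    (hM : 0 ≤ M) (hτM : τ ≤ M * r) (hsub : closedBall z r ⊆ closedBall y τ) :
    Eap N f z r ≤ pw M n * Eap N f y τ := by
  have := le_Eap N f (a := Eap N f z r) (b := 0) (z := y) (r := τ) (pw_ne_top M n) fun P hP => by
    rw [add_zero]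
    exact (iInf₂_le P hP).trans (Av_mono _ hr hτ hM hτM hsub)
  simpa using this

lemma Eap_le_Av {n : ℕ} (N : ℕ) (f : Rn n → ℝ) (z : Rn n) (r : ℝ) :
    Eap N f z r ≤ Av f z r := by
  refine (iInf₂_le (0 : MvPolynomial (Fin n) ℝ) (by simp)).trans ?_
  simp

/-- local finiteness -/
def LF {n : ℕ} (f : Rn n → ℝ) : Prop :=
  ∀ x r, ∫⁻ y in closedBall x r, ENNReal.ofReal |f y| ≠ ⊤

lemma LF_sub {n : ℕ} {f : Rn n → ℝ} (hf : LF f) (hfm : Measurable f) (P : MvPolynomial (Fin n) ℝ) :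
    LF (fun y => f y - MvPolynomial.eval y P) := by
  intro x r
  have h1 : ∫⁻ y in closedBall x r, ENNReal.ofReal |MvPolynomial.eval y P| ≠ ⊤ := by
    have : IntegrableOn (fun y => MvPolynomial.eval y P) (closedBall x r) :=
      (poly_cont P).continuousOn.integrableOn_compact (isCompact_closedBall x r)
    have h2 := this.2
    rw [HasFiniteIntegral] at h2
    simpa [Real.enorm_eq_ofReal_abs] using h2.ne
  refine ne_top_of_le_ne_top (ENNReal.add_ne_top.2 ⟨hf x r, h1⟩) ?_
  rw [← lintegral_add_left (hfm.abs.ennreal_ofReal)]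
  refine lintegral_mono fun y => ?_
  rw [← ENNReal.ofReal_add (abs_nonneg _) (abs_nonneg _)]
  exact ENNReal.ofReal_le_ofReal (abs_sub _ _)

lemma Av_usc {n : ℕ} {f : Rn n → ℝ} (hf : LF f) {r : ℝ} (hr : 0 < r) :
    UpperSemicontinuous fun y => Av f y r := by
  set μ := (volume : Measure (Rn n)).withDensity (fun y => ENNReal.ofReal |f y|) with hμ
  have hμb : ∀ x ρ, μ (closedBall x ρ) = ∫⁻ y in closedBall x ρ, ENNReal.ofReal |f y| :=
    fun x ρ => withDensity_apply _ measurableSet_closedBall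
  have hAv : ∀ y, Av f y r = (2 ^ n * pw r n)⁻¹ * μ (closedBall y r) := by
    intro y; rw [Av, vol_cb y hr, hμb]
  have hc : (2 ^ n * pw r n)⁻¹ ≠ ⊤ :=
    ENNReal.inv_ne_top.2 (mul_ne_zero (by simp) (pw_ne_zero hr _))
  intro y c hyc
  simp only [hAv] at hyc ⊢
  have h1 : Tendsto (fun ε => μ (cthickening ε (closedBall y r))) (𝓝 0)
      (𝓝 (μ (closedBall y r))) := by
    apply tendsto_measure_cthickening_of_isClosed _ isClosed_closedBall
    refine ⟨1, one_pos, ?_⟩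
    rw [cthickening_closedBall zero_le_one hr.le, hμb]
    exact hf _ _
  have h2 := ENNReal.Tendsto.const_mul (a := (2 ^ n * pw r n)⁻¹) h1 (Or.inr hc)
  have h3 := h2.eventually (gt_mem_nhds hyc)
  have h4 : Tendsto (fun z => dist z y) (𝓝 y) (𝓝 0) := by
    have : Continuous fun z => dist z y := by fun_prop
    simpa using this.tendsto y
  filter_upwards [h4.eventually h3] with z hz
  refine lt_of_le_of_lt ?_ hz
  refine mul_le_mul' le_rfl (measure_mono ?_)
  rw [cthickening_closedBall dist_nonneg hr.le]
  apply closedBall_subset_closedBall'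
  linarith

lemma Eap_meas {n : ℕ} (N : ℕ) {f : Rn n → ℝ} (hf : LF f) (hfm : Measurable f) {r : ℝ}
    (hr : 0 < r) : Measurable fun y => Eap N f y r := by
  apply UpperSemicontinuous.measurable
  exact upperSemicontinuous_biInf fun P _ => Av_usc (LF_sub hf hfm P) hr

def GG {n : ℕ} (N : ℕ) (s : ℝ) (f : Rn n → ℝ) (y : Rn n) : ℝ≥0∞ :=
  ⨆ i : ℕ, pw ((1 / 2) ^ (i + 1)) (-s) * Eap N f y ((1 / 2) ^ (i + 1))

lemma GG_meas {n : ℕ} (N : ℕ) (s : ℝ) {f : Rn n → ℝ} (hf : LF f) (hfm : Measurable f) :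
    Measurable (GG N s f) :=
  Measurable.iSup fun i => (Eap_meas N hf hfm (by positivity)).const_mul _

lemma Eap_le_GG {n : ℕ} (N : ℕ) {s : ℝ} (hs : 0 ≤ s) (f : Rn n → ℝ) {z y : Rn n} {r : ℝ} (hr : 0 < r)
    (hr4 : r ≤ 1 / 4) (hy : y ∈ closedBall z r) :
    Eap N f z r ≤ pw 4 n * pw 4 s * (pw r s * GG N s f y) := by
  obtain ⟨i, hi1, hi2⟩ := exists_nat_pow_near_of_lt_one (x := 4 * r) (y := 1 / 2) (by positivity)
    (by linarith) (by norm_num) (by norm_num)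
  set ρ : ℝ := (1 / 2) ^ (i + 1) with hρ
  have hρ0 : 0 < ρ := by positivity
  have hρ2 : 2 * r ≤ ρ := by rw [hρ, pow_succ]; linarith
  calc Eap N f z r ≤ pw 4 n * Eap N f y ρ := by
        apply Eap_mono N f hr hρ0 (by norm_num) hi1.le
        apply closedBall_subset_closedBall'
        rw [dist_comm]; have := mem_closedBall.1 hy; linarith
    _ = pw 4 n * (pw ρ s * (pw ρ (-s) * Eap N f y ρ)) := by
        rw [← mul_assoc (pw ρ s), ← pw_add hρ0, add_neg_cancel, pw_zero, one_mul]
    _ ≤ pw 4 n * (pw (4 * r) s * GG N s f y) := by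
        refine mul_le_mul' le_rfl (mul_le_mul' (pw_mono hρ0.le hi1.le hs) ?_)
        exact le_iSup (fun i : ℕ => pw ((1 / 2) ^ (i + 1)) (-s) * Eap N f y ((1 / 2) ^ (i + 1))) i
    _ = _ := by rw [pw_mul_base (by norm_num) hr.le]; ring

lemma GG_le {n : ℕ} (N : ℕ) {s q : ℝ} (hs : 0 ≤ s) (hq : 1 ≤ q) :
    ∃ K : ℝ≥0, ∀ (f : Rn n → ℝ) (y : Rn n), GG N s f y ≤ K *
      (∫⁻ t in Ioo (0:ℝ) 1, (pw t (-s) * Eap N f y t) ^ q * ENNReal.ofReal t⁻¹) ^ (1 / q) := by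
  obtain ⟨K, hK⟩ := lint_low 0
  have hq0 : 0 < q := by linarith
  refine ⟨((2 : ℝ) ^ s).toNNReal * ((2 : ℝ) ^ (n : ℝ)).toNNReal * K ^ (1 / q), fun f y => ?_⟩
  refine iSup_le fun i => ?_
  set r : ℝ := (1 / 2) ^ (i + 1) with hr
  have hr0 : 0 < r := by positivity
  have hr1 : 2 * r ≤ 1 := by
    rw [hr, pow_succ]; have : (1 / 2 : ℝ) ^ i ≤ 1 := pow_le_one₀ (by norm_num) (by norm_num)
    linarith
  have h1 : ∀ t ∈ Ioo r (2 * r), pw r (-s) * Eap N f y r ≤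
      pw 2 s * pw 2 n * (pw t (-s) * Eap N f y t) := by
    intro t ht
    have ht0 : 0 < t := hr0.trans ht.1
    have a1 : pw r (-s) ≤ pw 2 s * pw t (-s) := by
      have e : pw 2 s * pw t (-s) = pw (t / 2) (-s) := by
        unfold pw
        rw [← ENNReal.ofReal_mul (by positivity), Real.div_rpow ht0.le (by norm_num),
          Real.rpow_neg (by norm_num : (0:ℝ) ≤ 2), div_inv_eq_mul, mul_comm]
      rw [e]
      exact ENNReal.ofReal_le_ofReal
        (Real.rpow_le_rpow_of_nonpos (by positivity) (by linarith [ht.2]) (by linarith))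
    calc _ ≤ pw 2 s * pw t (-s) * (pw 2 n * Eap N f y t) :=
          mul_le_mul' a1 (Eap_mono N f hr0 ht0 (by norm_num) ht.2.le
            (closedBall_subset_closedBall ht.1.le))
      _ = _ := by ring
  have h2 : (pw r (-s) * Eap N f y r) ^ q ≤ K * ((pw 2 s * pw 2 n) ^ q *
      ∫⁻ t in Ioo (0:ℝ) 1, (pw t (-s) * Eap N f y t) ^ q * ENNReal.ofReal t⁻¹) := by
    calc (pw r (-s) * Eap N f y r) ^ q = pw r 0 * (pw r (-s) * Eap N f y r) ^ q := by
          rw [pw_zero, one_mul]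
      _ ≤ (K * ∫⁻ t in Ioo r (2 * r), pw t (0 - 1)) * (pw r (-s) * Eap N f y r) ^ q :=
          mul_le_mul' (hK r hr0) le_rfl
      _ = K * ∫⁻ t in Ioo r (2 * r), pw t (0 - 1) * (pw r (-s) * Eap N f y r) ^ q := by
          rw [mul_assoc, lintegral_mul_const _ (measurable_pw _)]
      _ ≤ K * ∫⁻ t in Ioo r (2 * r), (pw 2 s * pw 2 n) ^ q *
            ((pw t (-s) * Eap N f y t) ^ q * ENNReal.ofReal t⁻¹) := by
          refine mul_le_mul' le_rfl (setLIntegral_mono' measurableSet_Ioo fun t ht => ?_)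
          have e : pw t (0 - 1) = ENNReal.ofReal t⁻¹ := by
            rw [pw, zero_sub, Real.rpow_neg_one]
          rw [e, ← mul_assoc, ← ENNReal.mul_rpow_of_nonneg _ _ hq0.le, mul_comm]
          exact mul_le_mul' (ENNReal.rpow_le_rpow (h1 t ht) hq0.le) le_rfl
      _ = K * ((pw 2 s * pw 2 n) ^ q * ∫⁻ t in Ioo r (2 * r),
            ((pw t (-s) * Eap N f y t) ^ q * ENNReal.ofReal t⁻¹)) := by
          rw [lintegral_const_mul']
          exact ENNReal.rpow_ne_top_of_nonneg hq0.le
            (ENNReal.mul_ne_top (pw_ne_top _ _) (pw_ne_top _ _))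
      _ ≤ _ := by
          refine mul_le_mul' le_rfl (mul_le_mul' le_rfl (lintegral_mono_set fun t ht => ?_))
          exact ⟨hr0.trans ht.1, ht.2.trans_le hr1⟩
  have h3 := ENNReal.rpow_le_rpow h2 (z := 1 / q) (by positivity)
  rw [← ENNReal.rpow_mul, mul_one_div_cancel hq0.ne', ENNReal.rpow_one,
    ENNReal.mul_rpow_of_nonneg _ _ (by positivity), ENNReal.mul_rpow_of_nonneg _ _ (by positivity),
    ← ENNReal.rpow_mul, mul_one_div_cancel hq0.ne', ENNReal.rpow_one] at h3
  refine h3.trans (le_of_eq ?_)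
  rw [ENNReal.coe_mul, ENNReal.coe_mul, ENNReal.coe_rpow_of_nonneg _ (by positivity)]
  unfold pw
  simp only [ENNReal.ofReal]
  ring



def lineP {n : ℕ} (z y : Rn n) (P : MvPolynomial (Fin n) ℝ) : Polynomial ℝ :=
  MvPolynomial.aeval (fun i => Polynomial.C (z i) + Polynomial.C (y i) * Polynomial.X) P

lemma lineP_eval {n : ℕ} (z y : Rn n) (P : MvPolynomial (Fin n) ℝ) (l : ℝ) :
    (lineP z y P).eval l = MvPolynomial.eval (z + l • y) P := by
  unfold lineP
  induction P using MvPolynomial.induction_on with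
  | C a => simp
  | add P Q hP hQ => simp [hP, hQ]
  | mul_X P j hP => simp [hP, mul_comm l]

lemma lineP_deg {n : ℕ} (z y : Rn n) (P : MvPolynomial (Fin n) ℝ) :
    (lineP z y P).natDegree ≤ P.totalDegree := by
  unfold lineP
  conv_lhs => rw [P.as_sum]
  rw [map_sum]
  refine Polynomial.natDegree_sum_le_of_forall_le _ _ fun α hα => ?_
  rw [MvPolynomial.aeval_monomial]
  refine Polynomial.natDegree_mul_le.trans ?_
  rw [Polynomial.algebraMap_apply, Algebra.algebraMap_self_apply, Polynomial.natDegree_C, zero_add]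
  refine le_trans ?_ (MvPolynomial.le_totalDegree hα)
  refine (Polynomial.natDegree_prod_le _ _).trans ?_
  refine Finset.sum_le_sum fun i _ => ?_
  refine Polynomial.natDegree_pow_le.trans ?_
  have : (Polynomial.C (z i) + Polynomial.C (y i) * Polynomial.X : Polynomial ℝ).natDegree ≤ 1 := by
    compute_degree
  calc α i * _ ≤ α i * 1 := Nat.mul_le_mul_left _ this
    _ = _ := mul_one _

lemma lagr (N : ℕ) : ∃ c : ℕ → ℝ, ∀ p : Polynomial ℝ, p.natDegree ≤ N →
    p.eval 0 = ∑ i ∈ Finset.range (N + 1), c i * p.eval (1 / ((i : ℝ) + 1)) := by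
  set v : ℕ → ℝ := fun i => 1 / ((i : ℝ) + 1) with hv
  refine ⟨fun i => (Lagrange.basis (Finset.range (N + 1)) v i).eval 0, fun p hp => ?_⟩
  have hinj : Set.InjOn v (Finset.range (N + 1)) := by
    intro a _ b _ h
    simp only [hv, one_div, inv_inj] at h
    have : (a : ℝ) = b := by linarith
    exact_mod_cast this
  have h1 := Lagrange.eq_interpolate (f := p) (s := Finset.range (N + 1)) hinj (by
    rw [Finset.card_range]
    refine lt_of_le_of_lt Polynomial.degree_le_natDegree ?_
    exact_mod_cast Nat.lt_succ_of_le hp)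
  conv_lhs => rw [h1]
  rw [Lagrange.interpolate_apply, Polynomial.eval_finsetSum]
  refine Finset.sum_congr rfl fun i _ => ?_
  simp [hv, mul_comm]

lemma avg_cov {n : ℕ} (z : Rn n) {ρ : ℝ} (hρ : 0 < ρ) (g : Rn n → ℝ) :
    ⨍ y in closedBall z ρ, g y = ⨍ y in closedBall (0 : Rn n) 1, g (z + ρ • y) := by
  rw [setAverage_eq, setAverage_eq]
  have h1 := Measure.setIntegral_comp_smul_of_pos (volume : Measure (Rn n)) (fun x => g (z + x))
    (closedBall (0 : Rn n) 1) hρ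
  rw [smul_unitClosedBall_of_nonneg hρ.le] at h1
  have h2 := (measurePreserving_add_left (volume : Measure (Rn n)) z).setIntegral_preimage_emb
    (measurableEmbedding_addLeft z) g (closedBall z ρ)
  have h3 : (fun x => z + x) ⁻¹' closedBall z ρ = closedBall 0 ρ := by
    ext x; simp
  rw [h3] at h2
  rw [h1, h2, smul_smul]
  congr 1
  simp only [measureReal_def, Real.volume_pi_closedBall _ hρ.le,
    Real.volume_pi_closedBall _ zero_le_one]
  rw [ENNReal.toReal_ofReal (by positivity), ENNReal.toReal_ofReal (by positivity)]
  simp only [Module.finrank_fin_fun, Fintype.card_fin]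
  rw [← mul_inv, ← mul_pow]; congr 2; ring

lemma avg_le_Av {n : ℕ} (z : Rn n) (ρ : ℝ) (g : Rn n → ℝ) :
    ENNReal.ofReal |⨍ y in closedBall z ρ, g y| ≤ Av g z ρ := by
  rw [setAverage_eq', ← Real.enorm_eq_ofReal_abs]
  refine (enorm_integral_le_lintegral_enorm _).trans ?_
  rw [lintegral_smul_measure, Av]
  simp [Real.enorm_eq_ofReal_abs]

lemma LF_int {n : ℕ} {f : Rn n → ℝ} (hf : LF f) (hfm : Measurable f) (x : Rn n) (r : ℝ) :
    IntegrableOn f (closedBall x r) := by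
  refine ⟨hfm.aestronglyMeasurable, ?_⟩
  rw [HasFiniteIntegral]
  simpa [Real.enorm_eq_ofReal_abs] using (hf x r).lt_top

lemma int_avg {n : ℕ} {f : Rn n → ℝ} {x : Rn n} {r : ℝ} (h : IntegrableOn f (closedBall x r))
    (hr : 0 < r) :
    Integrable f ((volume (closedBall x r))⁻¹ • volume.restrict (closedBall x r)) :=
  h.smul_measure (ENNReal.inv_ne_top.2 (vol_cb_ne_zero x hr))

lemma avg_sub {n : ℕ} {f g : Rn n → ℝ} {x : Rn n} {r : ℝ} (h : IntegrableOn f (closedBall x r))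
    (h' : IntegrableOn g (closedBall x r)) (hr : 0 < r) :
    ⨍ y in closedBall x r, (f y - g y) =
      (⨍ y in closedBall x r, f y) - ⨍ y in closedBall x r, g y := by
  simp only [setAverage_eq']
  exact integral_sub (int_avg h hr) (int_avg h' hr)

lemma poly_int {n : ℕ} (P : MvPolynomial (Fin n) ℝ) (x : Rn n) (r : ℝ) :
    IntegrableOn (fun y => MvPolynomial.eval y P) (closedBall x r) :=
  (poly_cont P).continuousOn.integrableOn_compact (isCompact_closedBall x r)

lemma poly_repr {n N : ℕ} {c : ℕ → ℝ} (hc : ∀ p : Polynomial ℝ, p.natDegree ≤ N →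
    p.eval 0 = ∑ i ∈ Finset.range (N + 1), c i * p.eval (1 / ((i : ℝ) + 1)))
    (z : Rn n) {r : ℝ} (hr : 0 < r) (P : MvPolynomial (Fin n) ℝ) (hP : P.totalDegree ≤ N) :
    MvPolynomial.eval z P = ∑ i ∈ Finset.range (N + 1),
      c i * ⨍ y in closedBall z (1 / ((i : ℝ) + 1) * r), MvPolynomial.eval y P := by
  have h1 : ∀ i : ℕ, ⨍ y in closedBall z (1 / ((i : ℝ) + 1) * r), MvPolynomial.eval y P =
      ⨍ y in closedBall (0 : Rn n) 1, (lineP z (r • y) P).eval (1 / ((i : ℝ) + 1)) := by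
    intro i
    rw [avg_cov z (by positivity)]
    simp only [lineP_eval, smul_smul]
  have hi : ∀ i : ℕ, Integrable (fun y : Rn n => (lineP z (r • y) P).eval (1 / ((i : ℝ) + 1)))
      ((volume (closedBall (0 : Rn n) 1))⁻¹ • volume.restrict (closedBall 0 1)) := by
    intro i
    apply int_avg _ one_pos
    simp only [lineP_eval]
    have : Continuous fun y : Rn n =>
        MvPolynomial.eval (z + (1 / ((i : ℝ) + 1)) • r • y) P :=
      (poly_cont P).comp (by fun_prop)
    exact this.continuousOn.integrableOn_compact (isCompact_closedBall _ _)
  simp only [h1]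
  simp only [setAverage_eq']
  simp only [← integral_const_mul]
  rw [← integral_finsetSum _ fun i _ => (hi i).const_mul _]
  have h2 : ∀ y : Rn n, ∑ i ∈ Finset.range (N + 1),
      c i * (lineP z (r • y) P).eval (1 / ((i : ℝ) + 1)) = MvPolynomial.eval z P := by
    intro y
    rw [← hc _ ((lineP_deg _ _ _).trans hP), lineP_eval]; simp
  simp only [h2]
  rw [← setAverage_eq', setAverage_const (vol_cb_ne_zero _ one_pos) (vol_cb_ne_top _ _)]

lemma trace_bound {n : ℕ} (N : ℕ) : ∃ K : ℝ≥0, ∀ f : Rn n → ℝ, LF f → Measurable f → ∀ z : Rn n,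
    Tendsto (fun r : ℝ => ⨍ y in closedBall z r, f y) (𝓝[>] 0) (𝓝 0) →
    ∀ t : ℝ, 0 < t → ∀ P : MvPolynomial (Fin n) ℝ, P.totalDegree ≤ N →
    ENNReal.ofReal |MvPolynomial.eval z P| ≤
      K * Av (fun y => f y - MvPolynomial.eval y P) z t +
        K * ∑' j : ℕ, Eap N f z ((1 / 2) ^ j * t) := by
  obtain ⟨c, hc⟩ := lagr N
  set K0 : ℝ≥0 := ∑ i ∈ Finset.range (N + 1), (|c i|).toNNReal *
    (((i : ℝ) + 1) ^ (n : ℝ)).toNNReal with hK0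
  set K1 : ℝ≥0 := K0 * (1 + ((2 : ℝ) ^ (n : ℝ)).toNNReal) with hK1
  refine ⟨K0 + K1, fun f hf hfm z hz t ht P hP => ?_⟩
  set L : ℝ → ℝ := fun r => ∑ i ∈ Finset.range (N + 1),
      c i * ⨍ y in closedBall z (1 / ((i : ℝ) + 1) * r), f y with hL
  have h1 : ∀ r : ℝ, 0 < r → ∀ P : MvPolynomial (Fin n) ℝ, P.totalDegree ≤ N →
      ENNReal.ofReal |L r - MvPolynomial.eval z P| ≤
        K0 * Av (fun y => f y - MvPolynomial.eval y P) z r := by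
    intro r hr P hP
    rw [poly_repr hc z hr P hP, hL]
    simp only
    rw [← Finset.sum_sub_distrib]
    simp only [← mul_sub]
    have e : ∀ i : ℕ, (⨍ y in closedBall z (1 / ((i : ℝ) + 1) * r), f y) -
        ⨍ y in closedBall z (1 / ((i : ℝ) + 1) * r), MvPolynomial.eval y P =
        ⨍ y in closedBall z (1 / ((i : ℝ) + 1) * r), (f y - MvPolynomial.eval y P) := by
      intro i
      rw [avg_sub (LF_int hf hfm _ _) (poly_int P _ _) (by positivity)]
    simp only [e]
    calc ENNReal.ofReal |∑ i ∈ Finset.range (N + 1),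
          c i * ⨍ y in closedBall z (1 / ((i : ℝ) + 1) * r), (f y - MvPolynomial.eval y P)|
        ≤ ENNReal.ofReal (∑ i ∈ Finset.range (N + 1),
          |c i| * |⨍ y in closedBall z (1 / ((i : ℝ) + 1) * r), (f y - MvPolynomial.eval y P)|) := by
          apply ENNReal.ofReal_le_ofReal
          refine (Finset.abs_sum_le_sum_abs _ _).trans (le_of_eq ?_)
          simp only [abs_mul]
      _ = ∑ i ∈ Finset.range (N + 1), ENNReal.ofReal |c i| * ENNReal.ofReal
          |⨍ y in closedBall z (1 / ((i : ℝ) + 1) * r), (f y - MvPolynomial.eval y P)| := by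
          rw [ENNReal.ofReal_sum_of_nonneg fun i _ => by positivity]
          refine Finset.sum_congr rfl fun i _ => ?_
          rw [ENNReal.ofReal_mul (abs_nonneg _)]
      _ ≤ ∑ i ∈ Finset.range (N + 1), ENNReal.ofReal |c i| * (pw ((i : ℝ) + 1) n *
            Av (fun y => f y - MvPolynomial.eval y P) z r) := by
          refine Finset.sum_le_sum fun i _ => mul_le_mul' le_rfl ?_
          refine (avg_le_Av _ _ _).trans (Av_mono _ (by positivity) hr (by positivity) ?_ ?_)
          · rw [← mul_assoc, mul_one_div_cancel (by positivity), one_mul]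
          · apply closedBall_subset_closedBall
            have : 1 / ((i : ℝ) + 1) ≤ 1 := by
              rw [div_le_one (by positivity)]; have : (0 : ℝ) ≤ i := by positivity
              linarith
            nlinarith
      _ = _ := by
          rw [hK0]
          push_cast
          rw [Finset.sum_mul]
          refine Finset.sum_congr rfl fun i _ => ?_
          unfold pw ENNReal.ofReal
          ring
  have h2 : ∀ r : ℝ, 0 < r → ENNReal.ofReal |L r - L (1 / 2 * r)| ≤ K1 * Eap N f z r := by
    intro r hr
    have := le_Eap N f (z := z) (r := r) (a := ENNReal.ofReal |L r - L (1 / 2 * r)|) (b := 0)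
      (c := K1) ENNReal.coe_ne_top fun P hP => by
      rw [add_zero]
      calc ENNReal.ofReal |L r - L (1 / 2 * r)| ≤ ENNReal.ofReal |L r - MvPolynomial.eval z P| +
            ENNReal.ofReal |L (1 / 2 * r) - MvPolynomial.eval z P| := by
            rw [← ENNReal.ofReal_add (abs_nonneg _) (abs_nonneg _)]
            apply ENNReal.ofReal_le_ofReal
            rw [abs_sub_comm (L (1 / 2 * r))]
            exact abs_sub_le _ _ _
        _ ≤ K0 * Av (fun y => f y - MvPolynomial.eval y P) z r +
            K0 * (pw 2 n * Av (fun y => f y - MvPolynomial.eval y P) z r) := by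
            refine add_le_add (h1 r hr P hP) ((h1 _ (by positivity) P hP).trans ?_)
            refine mul_le_mul' le_rfl (Av_mono _ (by positivity) hr (by norm_num) (by linarith) ?_)
            exact closedBall_subset_closedBall (by linarith)
        _ = _ := by
            rw [hK1]; push_cast; unfold pw ENNReal.ofReal; ring
    simpa using this
  have h3 : ∀ m : ℕ, ENNReal.ofReal |MvPolynomial.eval z P| ≤
      K0 * Av (fun y => f y - MvPolynomial.eval y P) z t +
      (K1 * ∑ j ∈ Finset.range m, Eap N f z ((1 / 2) ^ j * t)) +
      ENNReal.ofReal |L ((1 / 2) ^ m * t)| := by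
    intro m
    induction m with
    | zero =>
      have := h1 t ht P hP
      calc ENNReal.ofReal |MvPolynomial.eval z P| ≤ ENNReal.ofReal |L t - MvPolynomial.eval z P| +
            ENNReal.ofReal |L t| := by
            rw [← ENNReal.ofReal_add (abs_nonneg _) (abs_nonneg _)]
            apply ENNReal.ofReal_le_ofReal
            have := abs_sub (L t) (L t - MvPolynomial.eval z P)
            rw [sub_sub_cancel] at this
            linarith
        _ ≤ _ := by
            simp only [Finset.range_zero, Finset.sum_empty, mul_zero, add_zero, pow_zero, one_mul]
            exact add_le_add this le_rfl
    | succ m ih =>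
      refine ih.trans ?_
      have e : (1 / 2 : ℝ) ^ (m + 1) * t = 1 / 2 * ((1 / 2) ^ m * t) := by ring
      rw [Finset.sum_range_succ, e, mul_add]
      have h4 := h2 ((1 / 2) ^ m * t) (by positivity)
      have h5 : ENNReal.ofReal |L ((1 / 2) ^ m * t)| ≤
          ENNReal.ofReal |L ((1 / 2) ^ m * t) - L (1 / 2 * ((1 / 2) ^ m * t))| +
          ENNReal.ofReal |L (1 / 2 * ((1 / 2) ^ m * t))| := by
        rw [← ENNReal.ofReal_add (abs_nonneg _) (abs_nonneg _)]
        apply ENNReal.ofReal_le_ofReal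
        have := abs_add_le (L ((1 / 2) ^ m * t) - L (1 / 2 * ((1 / 2) ^ m * t)))
          (L (1 / 2 * ((1 / 2) ^ m * t)))
        rwa [sub_add_cancel] at this
      calc _ ≤ K0 * Av (fun y => f y - MvPolynomial.eval y P) z t +
            (K1 * ∑ j ∈ Finset.range m, Eap N f z ((1 / 2) ^ j * t)) +
            (K1 * Eap N f z ((1 / 2) ^ m * t) + ENNReal.ofReal |L (1 / 2 * ((1 / 2) ^ m * t))|) :=
            add_le_add le_rfl (h5.trans (add_le_add h4 le_rfl))
        _ = _ := by ring
  have h4 : Tendsto (fun m : ℕ => L ((1 / 2) ^ m * t)) atTop (𝓝 0) := by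
    have : Tendsto (fun m : ℕ => ∑ i ∈ Finset.range (N + 1),
        c i * ⨍ y in closedBall z (1 / ((i : ℝ) + 1) * ((1 / 2) ^ m * t)), f y) atTop
        (𝓝 (∑ i ∈ Finset.range (N + 1), c i * 0)) := by
      refine tendsto_finsetSum _ fun i _ => Tendsto.const_mul _ ?_
      refine hz.comp (tendsto_nhdsWithin_iff.2 ⟨?_, Eventually.of_forall fun m => ?_⟩)
      · have : Tendsto (fun m : ℕ => (1 / 2 : ℝ) ^ m) atTop (𝓝 0) :=
          tendsto_pow_atTop_nhds_zero_of_lt_one (by norm_num) (by norm_num)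
        have := (this.mul_const t).const_mul (1 / ((i : ℝ) + 1))
        simpa using this
      · rw [mem_Ioi]
        positivity
    simp only [mul_zero, Finset.sum_const_zero] at this
    exact this
  have h5 : Tendsto (fun m : ℕ => ENNReal.ofReal |L ((1 / 2) ^ m * t)|) atTop (𝓝 0) := by
    have := ENNReal.tendsto_ofReal h4.abs
    simpa using this
  have h6 : Tendsto (fun m : ℕ => (K0 + K1 : ℝ≥0) * Av (fun y => f y - MvPolynomial.eval y P) z t +
      ((K0 + K1 : ℝ≥0) * ∑' j : ℕ, Eap N f z ((1 / 2) ^ j * t)) +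
      ENNReal.ofReal |L ((1 / 2) ^ m * t)|) atTop (𝓝 ((K0 + K1 : ℝ≥0) *
        Av (fun y => f y - MvPolynomial.eval y P) z t +
      ((K0 + K1 : ℝ≥0) * ∑' j : ℕ, Eap N f z ((1 / 2) ^ j * t)) + 0)) :=
    tendsto_const_nhds.add h5
  rw [add_zero] at h6
  refine ge_of_tendsto h6 (Eventually.of_forall fun m => (h3 m).trans ?_)
  refine add_le_add (add_le_add (mul_le_mul' ?_ le_rfl) (mul_le_mul' ?_ (ENNReal.sum_le_tsum _))) le_rfl
  · exact_mod_cast le_self_add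
  · exact_mod_cast le_add_self



def WW {n : ℕ} (S : Set (Rn n)) (N : ℕ) (s σ : ℝ) (f : Rn n → ℝ) (y : Rn n) : ℝ≥0∞ :=
  GG N s f y * pw (infDist y S) σ

lemma WW_meas {n : ℕ} (S : Set (Rn n)) (N : ℕ) (s σ : ℝ) {f : Rn n → ℝ} (hf : LF f)
    (hfm : Measurable f) : Measurable (WW S N s σ f) :=
  (GG_meas N s hf hfm).mul ((measurable_pw σ).comp measurable_infDist)

lemma E_bound {n : ℕ} {S : Set (Rn n)} {d C₀ : ℝ} (hS : IsDSet S d C₀) (hne : S.Nonempty)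
    (hd : 0 < d) (hd2 : d < n) (N : ℕ) (s σ : ℝ) (hs : 0 ≤ s) :
    ∃ K : ℝ≥0, ∀ f : Rn n → ℝ, LF f → Measurable f → ∀ z ∈ S, ∀ r : ℝ, 0 < r → r ≤ 1 / 8 →
      Eap N f z r ≤ K * (pw r (s - σ - n) * ∫⁻ y in closedBall z r, WW S N s σ f y) := by
  obtain ⟨κ, hκ0, hκ1, hκ⟩ := dset_porous hS hne hd hd2
  obtain ⟨K1, hK1⟩ := pw_comp σ κ 1 hκ0 one_pos
  refine ⟨2 * (((4 : ℝ) ^ (n : ℝ)).toNNReal * ((4 : ℝ) ^ s).toNNReal * K1),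
    fun f hf hfm z hz r hr hr8 => ?_⟩
  set A := closedBall z r ∩ {y | κ * r < infDist y S} with hA
  have hAm : MeasurableSet A :=
    measurableSet_closedBall.inter (measurableSet_lt measurable_const measurable_infDist)
  have h1 : ∀ y ∈ A, Eap N f z r ≤
      pw 4 n * pw 4 s * (K1 * pw r (s - σ)) * WW S N s σ f y := by
    intro y hy
    refine (Eap_le_GG N hs f hr (by linarith) hy.1).trans ?_
    have hyr : infDist y S ≤ 1 * r := by
      rw [one_mul]; exact (infDist_le_dist_of_mem hz).trans hy.1
    have a1 : 1 ≤ K1 * (pw r (-σ) * pw (infDist y S) σ) := by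
      calc (1 : ℝ≥0∞) = pw r (-σ) * pw r σ := by rw [← pw_add hr, neg_add_cancel, pw_zero]
        _ ≤ pw r (-σ) * (K1 * pw (infDist y S) σ) :=
            mul_le_mul' le_rfl (hK1 r _ hr (le_of_lt hy.2) hyr)
        _ = _ := by ring
    calc pw 4 n * pw 4 s * (pw r s * GG N s f y)
        ≤ pw 4 n * pw 4 s * (pw r s * GG N s f y) * (K1 * (pw r (-σ) * pw (infDist y S) σ)) :=
          le_mul_of_one_le_right' a1
      _ = pw 4 n * pw 4 s * (K1 * (pw r s * pw r (-σ))) * (GG N s f y * pw (infDist y S) σ) := by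
          ring
      _ = _ := by rw [← pw_add hr, ← sub_eq_add_neg]; rfl
  have h2 : Eap N f z r * (2 ^ n * pw r n) ≤ 2 * (pw 4 n * pw 4 s * (K1 * pw r (s - σ)) *
      ∫⁻ y in closedBall z r, WW S N s σ f y) := by
    rw [← vol_cb z hr]
    calc Eap N f z r * volume (closedBall z r) ≤ Eap N f z r * (2 * volume A) :=
          mul_le_mul' le_rfl (hκ z r hr hr8)
      _ = 2 * ∫⁻ y in A, Eap N f z r := by
          rw [lintegral_const, Measure.restrict_apply_univ]; ring
      _ ≤ 2 * ∫⁻ y in A, pw 4 n * pw 4 s * (K1 * pw r (s - σ)) * WW S N s σ f y :=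
          mul_le_mul' le_rfl (setLIntegral_mono' hAm h1)
      _ = 2 * (pw 4 n * pw 4 s * (K1 * pw r (s - σ)) * ∫⁻ y in A, WW S N s σ f y) := by
          rw [lintegral_const_mul _ (WW_meas S N s σ hf hfm)]
      _ ≤ _ := by
          refine mul_le_mul' le_rfl (mul_le_mul' le_rfl (lintegral_mono_set inter_subset_left))
  calc Eap N f z r ≤ Eap N f z r * 2 ^ n := le_mul_of_one_le_right' (one_le_pow₀ (by norm_num))
    _ = pw r (-n) * (Eap N f z r * (2 ^ n * pw r n)) := by
        rw [mul_left_comm, mul_left_comm (pw r (-n)) (2 ^ n), ← pw_add hr, neg_add_cancel, pw_zero,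
          mul_one]
    _ ≤ pw r (-n) * (2 * (pw 4 n * pw 4 s * (K1 * pw r (s - σ)) *
      ∫⁻ y in closedBall z r, WW S N s σ f y)) := mul_le_mul' le_rfl h2
    _ = 2 * (pw 4 n * pw 4 s * K1) * ((pw r (s - σ) * pw r (-n)) *
      ∫⁻ y in closedBall z r, WW S N s σ f y) := by ring
    _ = _ := by
        rw [← pw_add hr, ← sub_eq_add_neg]
        push_cast
        rfl

lemma meas_ballint {n : ℕ} {H : Rn n → ℝ≥0∞} (hH : Measurable H) (r : ℝ) :
    Measurable fun z : Rn n => ∫⁻ y in closedBall z r, H y := by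
  have hset : MeasurableSet {p : Rn n × Rn n | dist p.2 p.1 ≤ r} :=
    measurableSet_le (by fun_prop) measurable_const
  have e1 : ∀ z, ∫⁻ y in closedBall z r, H y =
      ∫⁻ y, {p : Rn n × Rn n | dist p.2 p.1 ≤ r}.indicator (fun p => H p.2) (z, y) := by
    intro z
    rw [← lintegral_indicator measurableSet_closedBall]
    rfl
  simp only [e1]
  exact ((hH.comp measurable_snd).indicator hset).lintegral_prod_right'

lemma geom_sum (η : ℝ) (hη : 0 < η) : ∃ K : ℝ≥0, ∑' j : ℕ, pw ((1 / 2) ^ j) η ≤ K := by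
  have e : ∀ j : ℕ, pw ((1 / 2) ^ j) η = (pw (1 / 2) η) ^ j := by
    intro j
    unfold pw
    rw [← ENNReal.ofReal_pow (by positivity), ← Real.rpow_natCast, ← Real.rpow_natCast,
      ← Real.rpow_mul (by norm_num), ← Real.rpow_mul (by norm_num), mul_comm]
  simp only [e]
  rw [ENNReal.tsum_geometric]
  have : (1 - pw (1 / 2) η)⁻¹ ≠ ⊤ := by
    rw [ENNReal.inv_ne_top]
    have : pw (1 / 2) η < 1 := by
      unfold pw
      rw [ENNReal.ofReal_lt_one]
      exact Real.rpow_lt_one (by norm_num) (by norm_num) hη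
    exact (tsub_pos_of_lt this).ne'
  exact ⟨_, (ENNReal.coe_toNNReal this).ge⟩

lemma key_est {n : ℕ} (hn : 2 ≤ n) {S : Set (Rn n)} {d C₀ : ℝ} (hS : IsDSet S d C₀)
    (hne : S.Nonempty) (hd1 : (n : ℝ) - 1 < d) (hd2 : d < n) (N : ℕ) (s σ : ℝ) (hs : 0 ≤ s)
    (hη : 0 < s - σ - n + d) :
    ∃ K : ℝ≥0, ∀ f : Rn n → ℝ, LF f → Measurable f → TraceZero S d f → ∀ x : Rn n, ∀ t : ℝ,
      0 < t → t ≤ 1 / 16 → infDist x S ≤ t →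
      Av f x t ≤ K * (pw t (s - σ - n) * ∫⁻ y in closedBall x (3 * t), WW S N s σ f y) := by
  have hn2 : (2 : ℝ) ≤ n := by exact_mod_cast hn
  have hd : 0 < d := by linarith
  obtain ⟨KE, hKE⟩ := E_bound hS hne hd hd2 N s σ hs
  obtain ⟨KT, hKT⟩ := trace_bound (n := n) N
  obtain ⟨KM, hKM⟩ := dset_markov hn hS hd1 N
  obtain ⟨KU, hKU⟩ := dset_upper hS hd
  obtain ⟨KG, hKG⟩ := geom_sum (s - σ - n + d) hη
  set c2 : ℝ≥0 := ((2 : ℝ) ^ (n : ℝ)).toNNReal with hc2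
  set c3 : ℝ≥0 := ((2 : ℝ) ^ (s - σ - n)).toNNReal with hc3
  have ec2 : pw 2 n = c2 := rfl
  have ec3 : pw 2 (s - σ - n) = c3 := rfl
  set B : ℝ≥0 := 1 + KM * KT * c2 * KU with hB
  refine ⟨c2 * (B * KE * c3 + KM * KT * KE * KU * KG), fun f hf hfm htr x t ht ht16 hx => ?_⟩
  obtain ⟨w, hw, hxw⟩ := near_pt hS.1 hne x hx
  set W := WW S N s σ f with hW
  have hWm : Measurable W := WW_meas S N s σ hf hfm
  set ν := (μH[d] : Measure (Rn n)).restrict (closedBall w t ∩ S) with hν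
  have hνu : ν univ ≤ KU * pw t d := by
    rw [hν, Measure.restrict_apply_univ]
    exact hKU w t ht (by linarith)
  have : IsFiniteMeasure ν := ⟨lt_of_le_of_lt hνu
    (ENNReal.mul_lt_top ENNReal.coe_lt_top (pw_ne_top _ _).lt_top)⟩
  have hνae : ∀ᵐ z ∂ν, Tendsto (fun r : ℝ => ⨍ y in closedBall z r, f y) (𝓝[>] 0) (𝓝 0) :=
    ae_restrict_of_ae_restrict_of_subset inter_subset_right htr
  have hνmem : ∀ᵐ z ∂ν, z ∈ closedBall w t ∩ S :=
    self_mem_ae_restrict (measurableSet_closedBall.inter hS.1.measurableSet)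
  set T : ℝ≥0∞ := ∫⁻ z, ∑' j : ℕ, Eap N f z ((1 / 2) ^ j * t) ∂ν with hT
  -- main inequality before infimum
  have h1 : ∀ P : MvPolynomial (Fin n) ℝ, P.totalDegree ≤ N → Av f w (2 * t) ≤
      B * Av (fun y => f y - MvPolynomial.eval y P) w (2 * t) + KM * KT * (pw t (-d) * T) := by
    intro P hP
    set a := Av (fun y => f y - MvPolynomial.eval y P) w (2 * t) with ha
    have i1 : ∫⁻ z, ENNReal.ofReal |MvPolynomial.eval z P| ∂ν ≤
        KT * (c2 * a) * (KU * pw t d) + KT * T := by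
      calc ∫⁻ z, ENNReal.ofReal |MvPolynomial.eval z P| ∂ν
          ≤ ∫⁻ z, (KT * (c2 * a) + KT * ∑' j : ℕ, Eap N f z ((1 / 2) ^ j * t)) ∂ν := by
            apply lintegral_mono_ae
            filter_upwards [hνae, hνmem] with z hz hzm
            refine (hKT f hf hfm z hz t ht P hP).trans ?_
            refine add_le_add (mul_le_mul' le_rfl ?_) le_rfl
            rw [← ec2]
            refine Av_mono _ ht (by positivity) (by norm_num) le_rfl ?_
            apply closedBall_subset_closedBall'
            have := mem_closedBall.1 hzm.1
            linarith
        _ = KT * (c2 * a) * ν univ + KT * T := by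
            rw [lintegral_add_left measurable_const, lintegral_const,
              lintegral_const_mul' _ _ ENNReal.coe_ne_top]
        _ ≤ _ := add_le_add (mul_le_mul' le_rfl hνu) le_rfl
    have i2 : ∀ y ∈ closedBall w (2 * t), ENNReal.ofReal |MvPolynomial.eval y P| ≤
        KM * KT * c2 * KU * a + KM * KT * (pw t (-d) * T) := by
      intro y hy
      refine (hKM w hw t ht (by linarith) P hP y hy).trans ?_
      calc _ ≤ KM * (pw t (-d) * (KT * (c2 * a) * (KU * pw t d) + KT * T)) :=
            mul_le_mul' le_rfl (mul_le_mul' le_rfl i1)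
        _ = KM * KT * c2 * KU * a * (pw t (-d) * pw t d) + KM * KT * (pw t (-d) * T) := by ring
        _ = _ := by rw [← pw_add ht, neg_add_cancel, pw_zero, mul_one]
    have hV0 := vol_cb_ne_zero w (show 0 < 2 * t by positivity)
    have hVt := vol_cb_ne_top w (2 * t)
    set X := KM * KT * c2 * KU * a + KM * KT * (pw t (-d) * T) with hX
    calc Av f w (2 * t) ≤ (volume (closedBall w (2 * t)))⁻¹ * ∫⁻ y in closedBall w (2 * t),
          (ENNReal.ofReal |f y - MvPolynomial.eval y P| + X) := by
          refine mul_le_mul' le_rfl (setLIntegral_mono' measurableSet_closedBall fun y hy => ?_)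
          refine le_trans ?_ (add_le_add le_rfl (i2 y hy))
          rw [← ENNReal.ofReal_add (abs_nonneg _) (abs_nonneg _)]
          apply ENNReal.ofReal_le_ofReal
          have := abs_add_le (f y - MvPolynomial.eval y P) (MvPolynomial.eval y P)
          rwa [sub_add_cancel] at this
      _ = a + X := by
          rw [lintegral_add_right _ measurable_const, lintegral_const, Measure.restrict_apply_univ,
            mul_add, mul_left_comm, ENNReal.inv_mul_cancel hV0 hVt, mul_one]
          rfl
      _ = _ := by rw [hX, hB]; push_cast; ring
  have h2 : Av f w (2 * t) ≤ B * Eap N f w (2 * t) + KM * KT * (pw t (-d) * T) :=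
    le_Eap N f ENNReal.coe_ne_top h1
  set I := ∫⁻ y in closedBall w (2 * t), W y with hI
  have h3 : T ≤ KE * (KU * (KG * (pw t (s - σ - n + d) * I))) := by
    calc T ≤ ∫⁻ z, ∑' j : ℕ, KE * (pw ((1 / 2) ^ j * t) (s - σ - n) *
          ∫⁻ y in closedBall z ((1 / 2) ^ j * t), W y) ∂ν := by
          apply lintegral_mono_ae
          filter_upwards [hνmem] with z hzm
          refine ENNReal.tsum_le_tsum fun j => ?_
          apply hKE f hf hfm z hzm.2 _ (by positivity)
          have : (1 / 2 : ℝ) ^ j ≤ 1 := pow_le_one₀ (by norm_num) (by norm_num)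
          nlinarith
      _ = ∑' j : ℕ, KE * (pw ((1 / 2) ^ j * t) (s - σ - n) *
          ∫⁻ z, ∫⁻ y in closedBall z ((1 / 2) ^ j * t), W y ∂volume ∂ν) := by
          rw [lintegral_tsum fun j =>
            (((meas_ballint hWm _).const_mul _).const_mul _).aemeasurable]
          congr 1; ext j
          rw [lintegral_const_mul _ ((meas_ballint hWm _).const_mul _),
            lintegral_const_mul _ (meas_ballint hWm _)]
      _ ≤ ∑' j : ℕ, KE * (KU * (pw t (s - σ - n + d) * I) * pw ((1 / 2) ^ j) (s - σ - n + d)) := by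
          refine ENNReal.tsum_le_tsum fun j => mul_le_mul' le_rfl ?_
          set ρ : ℝ := (1 / 2) ^ j * t with hρ
          have hj : (1 / 2 : ℝ) ^ j ≤ 1 := pow_le_one₀ (by norm_num) (by norm_num)
          have hρ0 : 0 < ρ := by positivity
          have hρt : ρ ≤ t := by nlinarith
          rw [fub ν volume hWm]
          have j1 : ∀ y, W y * ν (closedBall y ρ) ≤
              (closedBall w (2 * t)).indicator (fun y => KU * pw ρ d * W y) y := by
            intro y
            by_cases hy : y ∈ closedBall w (2 * t)
            · rw [indicator_of_mem hy, mul_comm]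
              refine mul_le_mul' ?_ le_rfl
              refine le_trans ?_ (hKU y ρ hρ0 (by linarith))
              rw [hν, Measure.restrict_apply measurableSet_closedBall]
              exact measure_mono (inter_subset_inter_right _ inter_subset_right)
            · rw [indicator_of_notMem hy]
              have : ν (closedBall y ρ) = 0 := by
                rw [hν, Measure.restrict_apply measurableSet_closedBall]
                have : closedBall y ρ ∩ (closedBall w t ∩ S) = ∅ := by
                  rw [eq_empty_iff_forall_notMem]
                  rintro v ⟨hv1, hv2, _⟩
                  apply hy
                  rw [mem_closedBall] at *
                  have := dist_triangle y v w
                  rw [dist_comm y v] at this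
                  linarith
                rw [this, measure_empty]
              rw [this, mul_zero]
          calc pw ρ (s - σ - n) * ∫⁻ y, W y * ν (closedBall y ρ)
              ≤ pw ρ (s - σ - n) * ∫⁻ y,
                (closedBall w (2 * t)).indicator (fun y => KU * pw ρ d * W y) y :=
                mul_le_mul' le_rfl (lintegral_mono j1)
            _ = pw ρ (s - σ - n) * (KU * pw ρ d * I) := by
                rw [lintegral_indicator measurableSet_closedBall, lintegral_const_mul _ hWm]
            _ = KU * ((pw ρ (s - σ - n) * pw ρ d) * I) := by ring
            _ = _ := by
                rw [← pw_add hρ0, hρ, pw_mul_base (by positivity) ht.le]; ring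
      _ = KE * (KU * (pw t (s - σ - n + d) * I) * ∑' j : ℕ, pw ((1 / 2) ^ j) (s - σ - n + d)) := by
          rw [ENNReal.tsum_mul_left, ENNReal.tsum_mul_left]
      _ ≤ KE * (KU * (pw t (s - σ - n + d) * I) * KG) :=
          mul_le_mul' le_rfl (mul_le_mul' le_rfl hKG)
      _ = _ := by ring
  have h4 : pw t (-d) * T ≤ KE * KU * KG * (pw t (s - σ - n) * I) := by
    calc pw t (-d) * T ≤ pw t (-d) * (KE * (KU * (KG * (pw t (s - σ - n + d) * I)))) :=
          mul_le_mul' le_rfl h3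
      _ = KE * KU * KG * ((pw t (-d) * pw t (s - σ - n + d)) * I) := by ring
      _ = _ := by
          rw [← pw_add ht]; congr 3; ring
  have h5 : Eap N f w (2 * t) ≤ KE * c3 * (pw t (s - σ - n) * I) := by
    refine (hKE f hf hfm w hw (2 * t) (by positivity) (by linarith)).trans (le_of_eq ?_)
    rw [pw_mul_base (by norm_num) ht.le, ec3]; ring
  have h6 : I ≤ ∫⁻ y in closedBall x (3 * t), W y := by
    apply lintegral_mono_set
    apply closedBall_subset_closedBall'
    rw [dist_comm]; linarith
  calc Av f x t ≤ c2 * Av f w (2 * t) := by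
        rw [← ec2]
        refine Av_mono _ ht (by positivity) (by norm_num) le_rfl ?_
        apply closedBall_subset_closedBall'; linarith
    _ ≤ c2 * (B * (KE * c3 * (pw t (s - σ - n) * I)) +
          KM * KT * (KE * KU * KG * (pw t (s - σ - n) * I))) := by
        refine mul_le_mul' le_rfl (h2.trans (add_le_add (mul_le_mul' le_rfl h5)
          (mul_le_mul' le_rfl h4)))
    _ = c2 * (B * KE * c3 + KM * KT * KE * KU * KG) * (pw t (s - σ - n) * I) := by ring
    _ ≤ _ := by
        push_cast
        exact mul_le_mul' le_rfl (mul_le_mul' le_rfl h6)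



lemma ae_pos {n : ℕ} {S : Set (Rn n)} {d C₀ : ℝ} (hS : IsDSet S d C₀) (hne : S.Nonempty)
    (hd2 : d < n) : ∀ᵐ y : Rn n, 0 < infDist y S := by
  have : ∀ᵐ y : Rn n, y ∉ S := measure_eq_zero_iff_ae_notMem.1 (dset_null hS hd2)
  filter_upwards [this] with y hy
  exact (hS.1.notMem_iff_infDist_pos hne).1 hy

def ZZ {n : ℕ} (S : Set (Rn n)) (N : ℕ) (s p b : ℝ) (f : Rn n → ℝ) (y : Rn n) : ℝ≥0∞ :=
  GG N s f y ^ p * pw (infDist y S) b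

lemma ZZ_meas {n : ℕ} (S : Set (Rn n)) (N : ℕ) (s p b : ℝ) {f : Rn n → ℝ} (hf : LF f)
    (hfm : Measurable f) : Measurable (ZZ S N s p b f) :=
  ((GG_meas N s hf hfm).pow_const p).mul ((measurable_pw b).comp measurable_infDist)

lemma holder_est {n : ℕ} (hn : 2 ≤ n) {S : Set (Rn n)} {d C₀ : ℝ} (hS : IsDSet S d C₀)
    (hne : S.Nonempty) (hd1 : (n : ℝ) - 1 < d) (hd2 : d < n) (N : ℕ) (s σ b p p' : ℝ) (hs : 0 ≤ s)
    (hη : 0 < s - σ - n + d) (hpp : p.HolderConjugate p') (hτ : -((σ - b / p) * p') < n - d) :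
    ∃ K : ℝ≥0, ∀ f : Rn n → ℝ, LF f → Measurable f → TraceZero S d f → ∀ x : Rn n, ∀ t : ℝ,
      0 < t → t ≤ 1 / 384 → infDist x S ≤ t →
      (pw t (-s) * Av f x t) ^ p ≤
        K * (pw t (-n - b) * ∫⁻ y in closedBall x (3 * t), ZZ S N s p b f y) := by
  have hn2 : (2 : ℝ) ≤ n := by exact_mod_cast hn
  have hd : 0 < d := by linarith
  have hp0 : 0 < p := hpp.pos
  have hp'0 : 0 < p' := hpp.symm.pos
  obtain ⟨K1, hK1⟩ := key_est hn hS hne hd1 hd2 N s σ hs hη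
  obtain ⟨K2, hK2⟩ := dset_int hS hne hd hd2 (-((σ - b / p) * p')) hτ
  set e : ℝ := (n + (σ - b / p) * p') * (1 / p') with he
  set c3 : ℝ≥0 := ((3 : ℝ) ^ e).toNNReal with hc3
  have ec3 : pw 3 e = c3 := rfl
  refine ⟨(K1 * (K2 ^ (1 / p') * c3)) ^ p, fun f hf hfm htr x t ht ht0 hx => ?_⟩
  set J := ∫⁻ y in closedBall x (3 * t), ZZ S N s p b f y with hJ
  have hδ : Measurable fun y : Rn n => infDist y S := measurable_infDist
  have hGm := GG_meas N s hf hfm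
  have h1 : ∫⁻ y in closedBall x (3 * t), WW S N s σ f y ≤
      J ^ (1 / p) * (K2 * pw (3 * t) (n + (σ - b / p) * p')) ^ (1 / p') := by
    have hae : ∀ᵐ y ∂(volume.restrict (closedBall x (3 * t))), 0 < infDist y S :=
      ae_restrict_of_ae (ae_pos hS hne hd2)
    calc ∫⁻ y in closedBall x (3 * t), WW S N s σ f y
        = ∫⁻ y in closedBall x (3 * t), ((fun y => GG N s f y * pw (infDist y S) (b / p)) *
            (fun y => pw (infDist y S) (σ - b / p))) y := by
          apply lintegral_congr_ae
          filter_upwards [hae] with y hy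
          simp only [WW, Pi.mul_apply]
          rw [mul_assoc, ← pw_add hy, add_sub_cancel]
      _ ≤ _ := ENNReal.lintegral_mul_le_Lp_mul_Lq _ hpp
          (hGm.mul ((measurable_pw _).comp hδ)).aemeasurable
          ((measurable_pw _).comp hδ).aemeasurable
      _ ≤ _ := by
          refine mul_le_mul' (ENNReal.rpow_le_rpow (le_of_eq ?_) (by positivity))
            (ENNReal.rpow_le_rpow ?_ (by positivity))
          · apply lintegral_congr_ae
            filter_upwards [hae] with y hy
            rw [ENNReal.mul_rpow_of_nonneg _ _ hp0.le, pw_rpow hy, div_mul_cancel₀ _ hp0.ne', ZZ]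
          · have h2 := hK2 x (3 * t) (by positivity) (by linarith) (by linarith)
            rw [neg_neg, sub_neg_eq_add] at h2
            refine le_trans (le_of_eq ?_) h2
            apply lintegral_congr_ae
            filter_upwards [hae] with y hy
            rw [pw_rpow hy]
  have h2 : pw t (-s) * Av f x t ≤ K1 * (K2 ^ (1 / p') * c3) *
      (pw t (-σ - n + e) * J ^ (1 / p)) := by
    calc pw t (-s) * Av f x t ≤ pw t (-s) * (K1 * (pw t (s - σ - n) *
          (J ^ (1 / p) * (K2 * pw (3 * t) (n + (σ - b / p) * p')) ^ (1 / p')))) := by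
          refine mul_le_mul' le_rfl ((hK1 f hf hfm htr x t ht (by linarith) hx).trans ?_)
          exact mul_le_mul' le_rfl (mul_le_mul' le_rfl h1)
      _ = K1 * (K2 ^ (1 / p') * pw 3 e) * (pw t (-s) * pw t (s - σ - n) * pw t e * J ^ (1 / p)) := by
          rw [ENNReal.mul_rpow_of_nonneg _ _ (by positivity), pw_rpow (by positivity), ← he,
            pw_mul_base (by norm_num) ht.le]
          ring
      _ = _ := by
          rw [← pw_add ht, ← pw_add ht, ec3]; congr 3; ring_nf
  calc (pw t (-s) * Av f x t) ^ p ≤ (K1 * (K2 ^ (1 / p') * c3) *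
      (pw t (-σ - n + e) * J ^ (1 / p))) ^ p := ENNReal.rpow_le_rpow h2 hp0.le
    _ = (K1 * (K2 ^ (1 / p') * c3)) ^ p * (pw t (-n - b) * J) := by
        rw [ENNReal.mul_rpow_of_nonneg _ _ hp0.le, ENNReal.mul_rpow_of_nonneg (pw _ _) _ hp0.le,
          ← ENNReal.rpow_mul J, one_div_mul_cancel hp0.ne', ENNReal.rpow_one, pw_rpow ht]
        congr 3
        have h3 : p⁻¹ + p'⁻¹ = 1 := hpp.inv_add_inv_eq_one
        rw [he]
        have h4 : p' ≠ 0 := hp'0.ne'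
        have h5 : p ≠ 0 := hp0.ne'
        have h6 : (1 / p') * p = p - 1 := by
          rw [one_div, eq_sub_of_add_eq' h3]; field_simp
        have h7 : (n + (σ - b / p) * p') * (1 / p') = n * (1 / p') + (σ - b / p) := by field_simp
        rw [h7]
        have : (-σ - n + (n * (1 / p') + (σ - b / p))) * p =
          -n * p + n * ((1 / p') * p) - b / p * p := by ring
        rw [this, h6, div_mul_cancel₀ _ h5]; ring
    _ = _ := by
        rw [ENNReal.coe_rpow_of_nonneg _ hp0.le, ENNReal.coe_mul, ENNReal.coe_mul,
          ENNReal.coe_rpow_of_nonneg _ (by positivity)]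

/-- the auxiliary function B -/
def BB {n : ℕ} (S : Set (Rn n)) (c : ℝ) (Z : Rn n → ℝ≥0∞) (x : Rn n) : ℝ≥0∞ :=
  ∫⁻ τ in Ioo 0 (1 / 192), (Ioi (infDist x S)).indicator
    (fun τ => pw τ c * ∫⁻ y in closedBall x (3 * τ), Z y) τ

lemma pt_est {n : ℕ} (hn : 2 ≤ n) {S : Set (Rn n)} {d C₀ : ℝ} (hS : IsDSet S d C₀)
    (hne : S.Nonempty) (hd1 : (n : ℝ) - 1 < d) (hd2 : d < n) (N : ℕ) (s σ b p p' ε : ℝ) (hs : 0 ≤ s)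
    (hη : 0 < s - σ - n + d) (hpp : p.HolderConjugate p') (hτ : -((σ - b / p) * p') < n - d) :
    ∃ K : ℝ≥0, ∀ f : Rn n → ℝ, LF f → Measurable f → TraceZero S d f → ∀ x : Rn n, ∀ t : ℝ,
      0 < t → t ≤ 1 / 384 → infDist x S ≤ t →
      pw t ε * (pw t (-s) * Av f x t) ^ p ≤ K * BB S (ε - n - b - 1) (ZZ S N s p b f) x := by
  obtain ⟨K1, hK1⟩ := holder_est hn hS hne hd1 hd2 N s σ b p p' hs hη hpp hτ
  obtain ⟨K2, hK2⟩ := lint_low (ε - n - b)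
  refine ⟨K1 * K2, fun f hf hfm htr x t ht ht0 hx => ?_⟩
  set Z := ZZ S N s p b f with hZ
  calc pw t ε * (pw t (-s) * Av f x t) ^ p
      ≤ pw t ε * (K1 * (pw t (-n - b) * ∫⁻ y in closedBall x (3 * t), Z y)) :=
        mul_le_mul' le_rfl (hK1 f hf hfm htr x t ht ht0 hx)
    _ = K1 * (pw t (ε - n - b) * ∫⁻ y in closedBall x (3 * t), Z y) := by
        have : ε - n - b = ε + (-n - b) := by ring
        rw [this, pw_add ht]; ring
    _ ≤ K1 * ((K2 * ∫⁻ τ in Ioo t (2 * t), pw τ (ε - n - b - 1)) *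
          ∫⁻ y in closedBall x (3 * t), Z y) :=
        mul_le_mul' le_rfl (mul_le_mul' (hK2 t ht) le_rfl)
    _ = K1 * K2 * ∫⁻ τ in Ioo t (2 * t), pw τ (ε - n - b - 1) *
          ∫⁻ y in closedBall x (3 * t), Z y := by
        rw [lintegral_mul_const _ (measurable_pw _)]; ring
    _ ≤ K1 * K2 * ∫⁻ τ in Ioo t (2 * t), (Ioi (infDist x S)).indicator
          (fun τ => pw τ (ε - n - b - 1) * ∫⁻ y in closedBall x (3 * τ), Z y) τ := by
        refine mul_le_mul' le_rfl (setLIntegral_mono' measurableSet_Ioo fun τ hτ => ?_)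
        rw [indicator_of_mem (show τ ∈ Ioi (infDist x S) from hx.trans_lt hτ.1)]
        refine mul_le_mul' le_rfl (lintegral_mono_set (closedBall_subset_closedBall ?_))
        linarith [hτ.1]
    _ ≤ _ := by
        rw [ENNReal.coe_mul]
        refine mul_le_mul' le_rfl (lintegral_mono_set fun τ hτ => ?_)
        exact ⟨ht.trans hτ.1, by linarith [hτ.2]⟩

lemma meas_ballint2 {n : ℕ} {H : Rn n → ℝ≥0∞} (hH : Measurable H) :
    Measurable fun a : Rn n × ℝ => ∫⁻ y in closedBall a.1 (3 * a.2), H y := by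
  have hset : MeasurableSet {p : (Rn n × ℝ) × Rn n | dist p.2 p.1.1 ≤ 3 * p.1.2} :=
    measurableSet_le (by fun_prop) (by fun_prop)
  have e1 : ∀ a : Rn n × ℝ, ∫⁻ y in closedBall a.1 (3 * a.2), H y =
      ∫⁻ y, {p : (Rn n × ℝ) × Rn n | dist p.2 p.1.1 ≤ 3 * p.1.2}.indicator (fun p => H p.2) (a, y) := by
    intro z
    rw [← lintegral_indicator measurableSet_closedBall]
    rfl
  simp only [e1]
  exact ((hH.comp measurable_snd).indicator hset).lintegral_prod_right'

set_option maxHeartbeats 400000 in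
lemma tonelli_est {n : ℕ} {S : Set (Rn n)} {d C₀ : ℝ} (hS : IsDSet S d C₀)
    (hne : S.Nonempty) (hd : 0 < d) (hd2 : d < n) (N : ℕ) (s b p ε : ℝ) (hb : 0 < b)
    (hε2 : ε < n - d) :
    ∃ K : ℝ≥0, ∀ f : Rn n → ℝ, LF f → Measurable f →
      ∫⁻ x, pw (infDist x S) (-ε) * BB S (ε - n - b - 1) (ZZ S N s p b f) x ≤
        K * ∫⁻ y, GG N s f y ^ p := by
  obtain ⟨K1, hK1⟩ := dset_int hS hne hd hd2 ε hε2
  set c3 : ℝ≥0 := ((3 : ℝ) ^ (n - ε)).toNNReal with hc3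
  have ec3 : pw 3 (n - ε) = c3 := rfl
  set c8 : ℝ≥0 := ((1 / 8 : ℝ) ^ (-b)).toNNReal with hc8
  have ec8 : pw (1 / 8) (-b) = c8 := rfl
  refine ⟨K1 * c3 * (b⁻¹.toNNReal * c8), fun f hf hfm => ?_⟩
  set Z := ZZ S N s p b f with hZ
  have hZm : Measurable Z := ZZ_meas S N s p b hf hfm
  set c := ε - n - b - 1 with hc
  have hδ : Measurable fun y : Rn n => infDist y S := measurable_infDist
  set a : Rn n → ℝ≥0∞ := fun x => pw (infDist x S) (-ε) with ha
  have ham : Measurable a := (measurable_pw _).comp hδ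
  set ν := (volume : Measure (Rn n)).withDensity a with hν
  have hset : MeasurableSet {q : Rn n × ℝ | infDist q.1 S < q.2} :=
    measurableSet_lt (hδ.comp measurable_fst) measurable_snd
  set F : Rn n → ℝ → ℝ≥0∞ := fun x τ => a x * {q : Rn n × ℝ | infDist q.1 S < q.2}.indicator
    (fun q => pw q.2 c * ∫⁻ y in closedBall q.1 (3 * q.2), Z y) (x, τ) with hF
  have hFm : Measurable (Function.uncurry F) :=
    (ham.comp measurable_fst).mul ((((measurable_pw c).comp measurable_snd).mul
      (meas_ballint2 hZm)).indicator hset)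
  set Zt : ℝ → Rn n → ℝ≥0∞ := fun τ y => {q : Rn n × ℝ | infDist q.1 S ≤ 4 * q.2}.indicator
    (fun q => Z q.1) (y, τ) with hZt
  have hset2 : MeasurableSet {q : Rn n × ℝ | infDist q.1 S ≤ 4 * q.2} :=
    measurableSet_le (hδ.comp measurable_fst) (by fun_prop)
  have hZtm : Measurable fun q : Rn n × ℝ => Zt q.2 q.1 :=
    (hZm.comp measurable_fst).indicator hset2
  have hZtm1 : ∀ τ, Measurable (Zt τ) := fun τ =>
    (hZtm.comp (measurable_prodMk_right (y := τ)) :)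
  have hZt_of : ∀ τ y, infDist y S ≤ 4 * τ → Zt τ y = Z y := by
    intro τ y h
    have : (y, τ) ∈ {q : Rn n × ℝ | infDist q.1 S ≤ 4 * q.2} := h
    simp only [hZt]; rw [indicator_of_mem this]
  have hZt_not : ∀ τ y, ¬ infDist y S ≤ 4 * τ → Zt τ y = 0 := by
    intro τ y h
    have : (y, τ) ∉ {q : Rn n × ℝ | infDist q.1 S ≤ 4 * q.2} := h
    simp only [hZt]; rw [indicator_of_notMem this]
  have hFle : ∀ x τ, F x τ ≤ pw τ c * (a x * ∫⁻ y in closedBall x (3 * τ), Zt τ y) := by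
    intro x τ
    by_cases h : infDist x S < τ
    · have h' : (x, τ) ∈ {q : Rn n × ℝ | infDist q.1 S < q.2} := h
      simp only [hF]
      rw [indicator_of_mem h', mul_left_comm]
      refine mul_le_mul' le_rfl (mul_le_mul' le_rfl ?_)
      refine setLIntegral_mono' measurableSet_closedBall fun y hy => ?_
      rw [hZt_of]
      have := infDist_le_infDist_add_dist (s := S) (x := y) (y := x)
      have h4 : dist y x ≤ 3 * τ := hy
      linarith
    · have h' : (x, τ) ∉ {q : Rn n × ℝ | infDist q.1 S < q.2} := h
      simp only [hF]
      rw [indicator_of_notMem h', mul_zero]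
      exact zero_le
  have hstep : ∀ τ ∈ Ioo (0 : ℝ) (1 / 192), ∫⁻ x, F x τ ≤
      ∫⁻ y, K1 * c3 * (Zt τ y * pw τ (-b - 1)) := by
    intro τ hτ
    have hm := meas_ballint (hZtm1 τ) (3 * τ)
    calc ∫⁻ x, F x τ ≤ ∫⁻ x, pw τ c * (a x * ∫⁻ y in closedBall x (3 * τ), Zt τ y) :=
          lintegral_mono fun x => hFle x τ
      _ = pw τ c * ∫⁻ x, ∫⁻ y in closedBall x (3 * τ), Zt τ y ∂volume ∂ν := by
          rw [lintegral_const_mul' _ _ (pw_ne_top _ _), hν, lintegral_withDensity_eq_lintegral_mul _ ham hm]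
          rfl
      _ = ∫⁻ y, pw τ c * (Zt τ y * ν (closedBall y (3 * τ))) := by
          rw [fub ν volume (hZtm1 τ), lintegral_const_mul' _ _ (pw_ne_top _ _)]
      _ ≤ _ := by
          refine lintegral_mono fun y => ?_
          by_cases h : infDist y S ≤ 4 * τ
          · rw [hν, withDensity_apply _ measurableSet_closedBall]
            have := hK1 y (3 * τ) (by linarith [hτ.1]) (by linarith [hτ.2]) (by linarith [hτ.1])
            calc _ ≤ pw τ c * (Zt τ y * (K1 * pw (3 * τ) (n - ε))) :=
                  mul_le_mul' le_rfl (mul_le_mul' le_rfl this)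
              _ = K1 * c3 * (Zt τ y * (pw τ c * pw τ (n - ε))) := by
                  rw [pw_mul_base (by norm_num) hτ.1.le, ec3]; ring
              _ = _ := by
                  rw [← pw_add hτ.1, hc]; congr 3; ring
          · rw [hZt_not _ _ h]; simp
  calc ∫⁻ x, a x * BB S c Z x = ∫⁻ x, ∫⁻ τ in Ioo 0 (1 / 192), F x τ := by
        apply lintegral_congr
        intro x
        rw [BB, ← lintegral_const_mul' _ _ (pw_ne_top _ _)]
        rfl
    _ = ∫⁻ τ in Ioo 0 (1 / 192), ∫⁻ x, F x τ := lintegral_lintegral_swap hFm.aemeasurable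
    _ ≤ ∫⁻ τ in Ioo 0 (1 / 192), ∫⁻ y, K1 * c3 * (Zt τ y * pw τ (-b - 1)) :=
        setLIntegral_mono' measurableSet_Ioo hstep
    _ = ∫⁻ y, ∫⁻ τ in Ioo 0 (1 / 192), K1 * c3 * (Zt τ y * pw τ (-b - 1)) := by
        rw [lintegral_lintegral_swap]
        have : Measurable fun q : ℝ × Rn n => K1 * c3 * (Zt q.1 q.2 * pw q.1 (-b - 1)) :=
          ((hZtm.comp measurable_swap).mul ((measurable_pw _).comp measurable_fst)).const_mul _
        exact this.aemeasurable
    _ ≤ ∫⁻ y, (K1 * c3 * (b⁻¹.toNNReal * c8) : ℝ≥0) * GG N s f y ^ p := by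
        apply lintegral_mono_ae
        filter_upwards [ae_pos hS hne hd2] with y hy
        calc ∫⁻ τ in Ioo 0 (1 / 192), K1 * c3 * (Zt τ y * pw τ (-b - 1))
            ≤ ∫⁻ τ in Ioi (0 : ℝ), (Ioi (1 / 8 * infDist y S)).indicator
              (fun τ => K1 * c3 * (Z y * pw τ (-b - 1))) τ := by
              refine (lintegral_mono_set (fun τ hτ => hτ.1)).trans ?_
              refine lintegral_mono fun τ => ?_
              by_cases h : infDist y S ≤ 4 * τ
              · rw [indicator_of_mem (show τ ∈ Ioi (1 / 8 * infDist y S) by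
                  rw [mem_Ioi]; linarith), hZt_of _ _ h]
              · rw [hZt_not _ _ h]; simp
          _ ≤ ∫⁻ τ in (Ioi (1 / 8 * infDist y S)), K1 * c3 * (Z y * pw τ (-b - 1)) := by
              refine (setLIntegral_le_lintegral _ _).trans ?_
              rw [lintegral_indicator measurableSet_Ioi]
          _ = K1 * c3 * (Z y * ∫⁻ τ in (Ioi (1 / 8 * infDist y S)), pw τ (-b - 1)) := by
              rw [lintegral_const_mul _ ((measurable_pw _).const_mul _),
                lintegral_const_mul _ (measurable_pw _)]
          _ ≤ K1 * c3 * (Z y * (b⁻¹.toNNReal * pw (1 / 8 * infDist y S) (-b))) :=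
              mul_le_mul' le_rfl (mul_le_mul' le_rfl (lint_Ioi hb (by positivity)))
          _ = K1 * c3 * (b⁻¹.toNNReal * c8) * (GG N s f y ^ p *
                (pw (infDist y S) b * pw (infDist y S) (-b))) := by
              rw [pw_mul_base (by norm_num) hy.le, ec8, hZ, ZZ]; ring
          _ = _ := by
              rw [← pw_add hy, add_neg_cancel, pw_zero, mul_one]; push_cast; ring
    _ = _ := by rw [lintegral_const_mul' _ _ ENNReal.coe_ne_top]



lemma add_rpow_le2 (a b : ℝ≥0∞) {r : ℝ} (hr : 0 ≤ r) :
    (a + b) ^ r ≤ 2 ^ r * (a ^ r + b ^ r) := by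
  rcases le_total a b with h | h
  · calc (a + b) ^ r ≤ (2 * b) ^ r := by
          refine ENNReal.rpow_le_rpow ?_ hr
          rw [two_mul]; gcongr
      _ = 2 ^ r * b ^ r := ENNReal.mul_rpow_of_nonneg _ _ hr
      _ ≤ _ := mul_le_mul' le_rfl le_add_self
  · calc (a + b) ^ r ≤ (2 * a) ^ r := by
          refine ENNReal.rpow_le_rpow ?_ hr
          rw [two_mul]; gcongr
      _ = 2 ^ r * a ^ r := ENNReal.mul_rpow_of_nonneg _ _ hr
      _ ≤ _ := mul_le_mul' le_rfl le_self_add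

lemma Av_indicator {n : ℕ} (Ω : Set (Rn n)) (f : Rn n → ℝ) (x : Rn n) (t : ℝ) :
    Av (Ω.indicator f) x t ≤ Av f x t := by
  refine mul_le_mul' le_rfl (lintegral_mono fun y => ?_)
  refine ENNReal.ofReal_le_ofReal ?_
  by_cases h : y ∈ Ω <;> simp [h]

lemma Eap_indicator {n : ℕ} {Ω : Set (Rn n)} (hΩ : IsOpen Ω) (N : ℕ) (f : Rn n → ℝ) (x : Rn n)
    {t : ℝ} (h : closedBall x t ∩ frontier Ω = ∅) :
    Eap N (Ω.indicator f) x t ≤ Eap N f x t := by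
  have hsub : closedBall x t ⊆ Ω ∪ (closure Ω)ᶜ := by
    intro y hy
    by_contra hc
    rw [mem_union, not_or, notMem_compl_iff] at hc
    have : y ∈ closedBall x t ∩ frontier Ω := ⟨hy, by
      rw [hΩ.frontier_eq]; exact ⟨hc.2, hc.1⟩⟩
    rw [h] at this
    exact this
  have hpc : IsPreconnected (closedBall x t) := (convex_closedBall x t).isPreconnected
  have hdis : Disjoint Ω (closure Ω)ᶜ :=
    disjoint_compl_right_iff_subset.2 subset_closure
  rcases IsPreconnected.subset_or_subset hΩ isClosed_closure.isOpen_compl hdis hsub hpc with h1 | h1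
  · refine le_iInf₂ fun P hP => (iInf₂_le P hP).trans (le_of_eq ?_)
    unfold Av
    congr 1
    refine setLIntegral_congr_fun measurableSet_closedBall fun y hy => ?_
    simp [indicator_of_mem (h1 hy)]
  · have : Eap N (Ω.indicator f) x t ≤ 0 := by
      refine (Eap_le_Av _ _ _ _).trans (le_of_eq ?_)
      unfold Av
      rw [setLIntegral_congr_fun (g := fun _ => 0) measurableSet_closedBall]
      · simp
      · intro y hy
        have : y ∉ Ω := fun hh => h1 hy (subset_closure hh)
        simp [this]
    exact this.trans zero_le

lemma ball_holder {n : ℕ} {p : ℝ} (hp : 1 < p) {f : Rn n → ℝ} (hfm : Measurable f) (x : Rn n) (r : ℝ) :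
    (∫⁻ y in closedBall x r, ENNReal.ofReal |f y|) ^ p ≤
      volume (closedBall x r) ^ (p - 1) * ∫⁻ y in closedBall x r, ENNReal.ofReal |f y| ^ p := by
  have hp0 : 0 < p := by linarith
  have hpp : p.HolderConjugate (p / (p - 1)) := Real.HolderConjugate.conjExponent hp
  have h := ENNReal.lintegral_mul_le_Lp_mul_Lq (volume.restrict (closedBall x r)) hpp
    (f := fun y => ENNReal.ofReal |f y|) (g := fun _ => 1)
    (by fun_prop) (by fun_prop)
  simp only [Pi.mul_apply, mul_one, ENNReal.one_rpow, lintegral_const, one_mul,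
    Measure.restrict_apply_univ] at h
  have h2 := ENNReal.rpow_le_rpow h hp0.le
  rw [ENNReal.mul_rpow_of_nonneg _ _ hp0.le, ← ENNReal.rpow_mul, ← ENNReal.rpow_mul,
    one_div_mul_cancel hp0.ne', ENNReal.rpow_one] at h2
  rw [mul_comm]
  convert h2 using 3
  have : p - 1 ≠ 0 := by linarith
  field_simp

lemma LF_of {n : ℕ} {p : ℝ} (hp : 1 < p) {f : Rn n → ℝ} (hfm : Measurable f)
    (h : ∫⁻ x, ENNReal.ofReal |f x| ^ p ≠ ⊤) : LF f := by
  intro x r hc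
  have := ball_holder hp hfm x r
  rw [hc, ENNReal.top_rpow_of_pos (by linarith), top_le_iff] at this
  refine ENNReal.mul_ne_top (ENNReal.rpow_ne_top_of_nonneg (by linarith) (vol_cb_ne_top x r))
    (ne_top_of_le_ne_top h (setLIntegral_le_lintegral _ _)) this

lemma Av_one {n : ℕ} (f : Rn n → ℝ) (x : Rn n) :
    Av f x 1 = (2 ^ n)⁻¹ * ∫⁻ y in closedBall x 1, ENNReal.ofReal |f y| := by
  rw [Av, vol_cb x one_pos]
  simp [pw]

lemma Av_one_meas {n : ℕ} {f : Rn n → ℝ} (hfm : Measurable f) : Measurable fun x => Av f x 1 := by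
  simp only [Av_one]
  exact (meas_ballint (H := fun y => ENNReal.ofReal |f y|) (by fun_prop) 1).const_mul _

lemma far_est {n : ℕ} {p : ℝ} (hp : 1 < p) {f : Rn n → ℝ} (hfm : Measurable f) :
    ∫⁻ x, Av f x 1 ^ p ≤ ∫⁻ x, ENNReal.ofReal |f x| ^ p := by
  have hp0 : 0 < p := by linarith
  set v : ℝ≥0∞ := 2 ^ n with hv
  have hv0 : v ≠ 0 := by simp [hv]
  have hvt : v ≠ ⊤ := by simp [hv]
  have hvol : ∀ x : Rn n, volume (closedBall x 1) = v := by
    intro x; rw [vol_cb x one_pos]; simp [pw, hv]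
  calc ∫⁻ x, Av f x 1 ^ p
      ≤ ∫⁻ x, v⁻¹ * ∫⁻ y in closedBall x 1, ENNReal.ofReal |f y| ^ p := by
        refine lintegral_mono fun x => ?_
        rw [Av_one, ENNReal.mul_rpow_of_nonneg _ _ hp0.le]
        refine (mul_le_mul' le_rfl (ball_holder hp hfm x 1)).trans (le_of_eq ?_)
        rw [hvol, ← mul_assoc]
        congr 1
        rw [ENNReal.inv_rpow, ← ENNReal.rpow_neg, ← ENNReal.rpow_add _ _ hv0 hvt,
          ← ENNReal.rpow_neg_one]
        congr 1; ring
    _ = v⁻¹ * ∫⁻ x, ∫⁻ y in closedBall x 1, ENNReal.ofReal |f y| ^ p :=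
        lintegral_const_mul' _ _ (by simp [hv0])
    _ = v⁻¹ * ∫⁻ y, ENNReal.ofReal |f y| ^ p * v := by
        rw [fub volume volume (by fun_prop)]
        simp only [hvol]
    _ = _ := by
        rw [lintegral_mul_const' _ _ hvt, mul_comm, mul_assoc, ENNReal.mul_inv_cancel hv0 hvt, mul_one]

lemma BB_meas {n : ℕ} (S : Set (Rn n)) (c : ℝ) {Z : Rn n → ℝ≥0∞} (hZ : Measurable Z) :
    Measurable (BB S c Z) := by
  have hset : MeasurableSet {q : Rn n × ℝ | infDist q.1 S < q.2} :=
    measurableSet_lt (measurable_infDist.comp measurable_fst) measurable_snd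
  have hF : Measurable ({q : Rn n × ℝ | infDist q.1 S < q.2}.indicator
    (fun q => pw q.2 c * ∫⁻ y in closedBall q.1 (3 * q.2), Z y)) :=
    ((((measurable_pw c).comp measurable_snd).mul (meas_ballint2 hZ)).indicator hset)
  have := hF.lintegral_prod_right' (ν := volume.restrict (Ioo 0 (1 / 192)))
  exact this



def II {n : ℕ} (N : ℕ) (s q : ℝ) (f : Rn n → ℝ) (x : Rn n) : ℝ≥0∞ :=
  ∫⁻ t in Ioo (0:ℝ) 1, (pw t (-s) * Eap N f x t) ^ q * ENNReal.ofReal t⁻¹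

lemma pt_main {n : ℕ} (hn : 2 ≤ n) {Ω : Set (Rn n)} (hΩ : IsOpen Ω) {d C₀ : ℝ}
    (hS : IsDSet (frontier Ω) d C₀)
    (hne : (frontier Ω).Nonempty) (hd1 : (n : ℝ) - 1 < d) (hd2 : d < n) (N : ℕ)
    (s σ b p p' ε q : ℝ) (hs : 0 ≤ s)
    (hη : 0 < s - σ - n + d) (hpp : p.HolderConjugate p') (hτ : -((σ - b / p) * p') < n - d)
    (hε : 0 < ε) (hq : 1 ≤ q) :
    ∃ K : ℝ≥0∞, K ≠ ⊤ ∧ ∀ f : Rn n → ℝ, LF f → Measurable f → TraceZero (frontier Ω) d f →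
      ∀ x : Rn n, 0 < infDist x (frontier Ω) →
      II N s q (Ω.indicator f) x ^ (p / q) ≤ K * (II N s q f x ^ (p / q) +
        (pw (infDist x (frontier Ω)) (-ε) *
          BB (frontier Ω) (ε - n - b - 1) (ZZ (frontier Ω) N s p b f) x + Av f x 1 ^ p)) := by
  obtain ⟨K1, hK1⟩ := pt_est hn hS hne hd1 hd2 N s σ b p p' ε hs hη hpp hτ
  have hp0 : 0 < p := hpp.pos
  have hq0 : 0 < q := by linarith
  set r := p / q with hr
  have hr0 : 0 < r := by positivity
  set e := ε * (q / p) with he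
  have he0 : 0 < e := by positivity
  set k : ℝ≥0∞ := ((Real.toNNReal e⁻¹ : ℝ≥0) : ℝ≥0∞) with hk
  set k2 : ℝ≥0∞ := K1 * (k ^ r * pw (1 / 2) (-ε)) with hk2
  set k3 : ℝ≥0∞ := (pw 384 s * pw 384 n) ^ p * ENNReal.ofReal 384 ^ r with hk3
  have hk2t : k2 ≠ ⊤ := ENNReal.mul_ne_top ENNReal.coe_ne_top (ENNReal.mul_ne_top
    (ENNReal.rpow_ne_top_of_nonneg hr0.le ENNReal.coe_ne_top) (pw_ne_top _ _))
  have hk3t : k3 ≠ ⊤ := ENNReal.mul_ne_top (ENNReal.rpow_ne_top_of_nonneg hp0.le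
    (ENNReal.mul_ne_top (pw_ne_top _ _) (pw_ne_top _ _)))
    (ENNReal.rpow_ne_top_of_nonneg hr0.le ENNReal.ofReal_ne_top)
  have h2t : (2 : ℝ≥0∞) ^ r ≠ ⊤ := ENNReal.rpow_ne_top_of_nonneg hr0.le (by simp)
  refine ⟨2 ^ r * (1 + 2 ^ r * (k2 + k3)), ENNReal.mul_ne_top h2t (ENNReal.add_ne_top.2
    ⟨by simp, ENNReal.mul_ne_top h2t (ENNReal.add_ne_top.2 ⟨hk2t, hk3t⟩)⟩),
    fun f hf hfm htr x hx => ?_⟩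
  set δ := infDist x (frontier Ω) with hδ
  set B := BB (frontier Ω) (ε - n - b - 1) (ZZ (frontier Ω) N s p b f) x with hB
  set A := Av f x 1 with hA
  set F2 : ℝ → ℝ≥0∞ := fun t => (K1 * B) ^ (q / p) *
    (Ioi (1 / 2 * δ)).indicator (fun t => pw t (-e - 1)) t with hF2
  set F3 : ℝ≥0∞ := (pw 384 s * (pw 384 n * A)) ^ q * ENNReal.ofReal 384 with hF3
  have hF2m : Measurable F2 :=
    ((measurable_pw _).indicator measurableSet_Ioi).const_mul _
  have hpt : ∀ t ∈ Ioo (0:ℝ) 1, (pw t (-s) * Eap N (Ω.indicator f) x t) ^ q * ENNReal.ofReal t⁻¹ ≤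
      (pw t (-s) * Eap N f x t) ^ q * ENNReal.ofReal t⁻¹ + (F2 t + F3) := by
    intro t ht
    rcases eq_or_ne (closedBall x t ∩ frontier Ω) ∅ with h | h
    · refine le_trans ?_ le_self_add
      have := Eap_indicator hΩ N f x h
      gcongr
    · refine le_trans ?_ le_add_self
      obtain ⟨w, hw1, hw2⟩ := nonempty_iff_ne_empty.2 h
      have hδt : δ ≤ t := (infDist_le_dist_of_mem hw2).trans (by rw [dist_comm]; exact hw1)
      have hEA : Eap N (Ω.indicator f) x t ≤ Av f x t :=
        (Eap_le_Av _ _ _ _).trans (Av_indicator _ _ _ _)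
      rcases le_or_gt t (1 / 384) with h1 | h1
      · refine le_trans ?_ le_self_add
        have h2 := hK1 f hf hfm htr x t ht.1 h1 hδt
        have h3 : (pw t (-s) * Av f x t) ^ p ≤ K1 * B * pw t (-ε) := by
          calc (pw t (-s) * Av f x t) ^ p = pw t ε * (pw t (-s) * Av f x t) ^ p * pw t (-ε) := by
                rw [mul_right_comm, ← pw_add ht.1, add_neg_cancel, pw_zero, one_mul]
            _ ≤ _ := mul_le_mul' h2 le_rfl
        have h4 : (pw t (-s) * Av f x t) ^ q ≤ (K1 * B) ^ (q / p) * pw t (-e) := by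
          have h5 := ENNReal.rpow_le_rpow h3 (show 0 ≤ q / p by positivity)
          rw [← ENNReal.rpow_mul, mul_div_cancel₀ _ hp0.ne',
            ENNReal.mul_rpow_of_nonneg _ _ (show 0 ≤ q / p by positivity), pw_rpow ht.1] at h5
          rw [he, ← neg_mul]; exact h5
        have hmem : t ∈ Ioi (1 / 2 * δ) := by rw [mem_Ioi]; linarith
        simp only [hF2]
        rw [indicator_of_mem hmem, sub_eq_add_neg, pw_add ht.1, ← mul_assoc]
        refine mul_le_mul' (le_trans (by gcongr) h4) (le_of_eq ?_)
        rw [pw, Real.rpow_neg_one]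
      · refine le_trans ?_ le_add_self
        have hti : t⁻¹ ≤ 384 := by
          rw [inv_le_comm₀ ht.1 (by norm_num)]; linarith
        have h2 : pw t (-s) ≤ pw 384 s := by
          have : pw t (-s) = pw t⁻¹ s := by
            rw [pw, pw, Real.rpow_neg ht.1.le, Real.inv_rpow ht.1.le]
          rw [this]
          exact pw_mono (inv_nonneg.2 ht.1.le) hti hs
        have h3 : Av f x t ≤ pw 384 n * A :=
          Av_mono f ht.1 one_pos (by norm_num) (by linarith) (closedBall_subset_closedBall ht.2.le)
        have h4 := hEA.trans h3
        have h5 := ENNReal.ofReal_le_ofReal hti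
        rw [hF3]
        gcongr
  have hII : II N s q (Ω.indicator f) x ≤ II N s q f x +
      ((K1 * B) ^ (q / p) * (k * (pw (1 / 2) (-e) * pw δ (-e))) + F3) := by
    calc II N s q (Ω.indicator f) x ≤ ∫⁻ t in Ioo (0:ℝ) 1,
          ((pw t (-s) * Eap N f x t) ^ q * ENNReal.ofReal t⁻¹ + (F2 t + F3)) :=
          setLIntegral_mono' measurableSet_Ioo hpt
      _ = II N s q f x + ((∫⁻ t in Ioo (0:ℝ) 1, F2 t) + F3) := by
          have hm : Measurable fun t => F2 t + F3 := hF2m.add measurable_const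
          rw [lintegral_add_right _ hm, lintegral_add_left hF2m]
          simp [II]
      _ ≤ _ := by
          refine add_le_add le_rfl (add_le_add ?_ le_rfl)
          refine (setLIntegral_le_lintegral _ _).trans ?_
          simp only [hF2]
          rw [lintegral_const_mul _ ((measurable_pw _).indicator measurableSet_Ioi),
            lintegral_indicator measurableSet_Ioi]
          refine mul_le_mul' le_rfl ((lint_Ioi he0 (by positivity)).trans (le_of_eq ?_))
          rw [pw_mul_base (by norm_num) hx.le]
  have her : -e * r = -ε := by rw [he, hr]; field_simp
  have hG : ((K1 * B) ^ (q / p) * (k * (pw (1 / 2) (-e) * pw δ (-e)))) ^ r =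
      k2 * (pw δ (-ε) * B) := by
    rw [ENNReal.mul_rpow_of_nonneg _ _ hr0.le, ENNReal.mul_rpow_of_nonneg _ _ hr0.le,
      ENNReal.mul_rpow_of_nonneg _ _ hr0.le, pw_rpow (by norm_num), pw_rpow hx, her,
      ← ENNReal.rpow_mul, show q / p * r = 1 by rw [hr]; field_simp, ENNReal.rpow_one, hk2]
    ring
  have hF3r : F3 ^ r = k3 * A ^ p := by
    rw [hF3, hk3, ENNReal.mul_rpow_of_nonneg _ _ hr0.le, ← ENNReal.rpow_mul,
      show q * r = p by rw [hr]; field_simp, ← mul_assoc, ENNReal.mul_rpow_of_nonneg _ _ hp0.le]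
    ring
  calc II N s q (Ω.indicator f) x ^ r
      ≤ 2 ^ r * (II N s q f x ^ r + 2 ^ r * (k2 * (pw δ (-ε) * B) + k3 * A ^ p)) := by
        refine (ENNReal.rpow_le_rpow hII hr0.le).trans ((add_rpow_le2 _ _ hr0.le).trans ?_)
        refine mul_le_mul' le_rfl (add_le_add le_rfl ((add_rpow_le2 _ _ hr0.le).trans ?_))
        rw [hG, hF3r]
    _ ≤ 2 ^ r * ((1 + 2 ^ r * (k2 + k3)) * II N s q f x ^ r + ((1 + 2 ^ r * (k2 + k3)) * (pw δ (-ε) * B) +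
          (1 + 2 ^ r * (k2 + k3)) * A ^ p)) := by
        refine mul_le_mul' le_rfl (add_le_add ?_ ?_)
        · exact le_mul_of_one_le_left' le_self_add
        · rw [mul_add, ← mul_assoc _ k2, ← mul_assoc _ k3]
          refine add_le_add (mul_le_mul' ?_ le_rfl) (mul_le_mul' ?_ le_rfl)
          · exact (mul_le_mul' le_rfl le_self_add).trans le_add_self
          · exact (mul_le_mul' le_rfl le_add_self).trans le_add_self
    _ = _ := by ring

lemma tl_eq {n : ℕ} (s p q : ℝ) (f : Rn n → ℝ) : tlNorm s p q f =
    (∫⁻ x, ENNReal.ofReal |f x| ^ p) ^ (1 / p) + (∫⁻ x, II ⌊s⌋₊ s q f x ^ (p / q)) ^ (1 / p) := by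
  unfold tlNorm
  simp only [localApprox_eq, ← ENNReal.rpow_mul, one_div_mul_eq_div]
  rfl

lemma main_ne {n : ℕ} (hn : 2 ≤ n) (Ω : Set (Rn n))
    (hΩo : IsOpen Ω) (d C₀ : ℝ) (hne : (frontier Ω).Nonempty)
    (hbd : IsDSet (frontier Ω) d C₀) (hd1 : (n : ℝ) - 1 < d) (hd2 : d < n)
    (p q s : ℝ) (hp : 1 < p) (hq : 1 ≤ q) (hs : ((n : ℝ) - d) / p < s) :
    ∃ c > 0, ∀ f : Rn n → ℝ, Measurable f → tlNorm s p q f < ⊤ →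
      TraceZero (frontier Ω) d f →
      tlNorm s p q (Ω.indicator f) ≤ ENNReal.ofReal c * tlNorm s p q f := by
  have hn2 : (2 : ℝ) ≤ n := by exact_mod_cast hn
  have hd : 0 < d := by linarith
  have hp0 : 0 < p := by linarith
  have hq0 : 0 < q := by linarith
  have hnd : 0 < (n : ℝ) - d := by linarith
  have hndp : 0 < ((n : ℝ) - d) / p := by positivity
  have hs0 : 0 ≤ s := by linarith
  obtain ⟨s', hs'1, hs'2⟩ := exists_between hs
  set σ := s' - n + d with hσ
  set b := (s' * p - (n - d)) / 2 with hb
  have hb0 : 0 < b := by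
    have := (div_lt_iff₀ hp0).1 hs'1
    rw [hb]; linarith
  set ε := ((n : ℝ) - d) / 2 with hε
  have hpp : p.HolderConjugate (p / (p - 1)) := Real.HolderConjugate.conjExponent hp
  have hτ : -((σ - b / p) * (p / (p - 1))) < n - d := by
    have hp1 : 0 < p - 1 := by linarith
    have e1 : -((σ - b / p) * (p / (p - 1))) = (b - σ * p) / (p - 1) := by
      field_simp; ring
    rw [e1, div_lt_iff₀ hp1, hσ]
    have := (div_lt_iff₀ hp0).1 hs'1
    rw [hb]
    nlinarith
  obtain ⟨K1, hK1t, hK1⟩ := pt_main hn hΩo hbd hne hd1 hd2 ⌊s⌋₊ s σ b p (p / (p - 1)) ε q hs0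
    (by rw [hσ]; linarith) hpp hτ (by positivity) hq
  obtain ⟨K2, hK2⟩ := tonelli_est hbd hne hd hd2 ⌊s⌋₊ s b p ε hb0 (by rw [hε]; linarith)
  obtain ⟨K3, hK3⟩ := GG_le (n := n) ⌊s⌋₊ hs0 hq
  set K : ℝ≥0∞ := K1 * (1 + K2 * K3 ^ p) with hK
  have hKt : K ≠ ⊤ := ENNReal.mul_ne_top hK1t (ENNReal.add_ne_top.2 ⟨by simp,
    ENNReal.mul_ne_top ENNReal.coe_ne_top (ENNReal.rpow_ne_top_of_nonneg hp0.le ENNReal.coe_ne_top)⟩)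
  have hp1' : 0 ≤ 1 / p := by positivity
  set L : ℝ≥0∞ := 1 + K ^ (1 / p) * 2 ^ (1 / p) with hL
  have hLt : L ≠ ⊤ := ENNReal.add_ne_top.2 ⟨by simp, ENNReal.mul_ne_top
    (ENNReal.rpow_ne_top_of_nonneg hp1' hKt) (ENNReal.rpow_ne_top_of_nonneg hp1' (by simp))⟩
  have hL1 : 1 ≤ L := le_self_add
  refine ⟨L.toReal, ENNReal.toReal_pos (fun h => by simp [h] at hL1) hLt, fun f hfm hfin htr => ?_⟩
  rw [ENNReal.ofReal_toReal hLt]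
  rw [tl_eq] at hfin
  rw [tl_eq, tl_eq]
  set X := ∫⁻ x, ENNReal.ofReal |f x| ^ p with hX
  set Y := ∫⁻ x, II ⌊s⌋₊ s q f x ^ (p / q) with hY
  have hXt : X ≠ ⊤ := by
    intro h
    rw [h, ENNReal.top_rpow_of_pos (by positivity)] at hfin
    simp at hfin
  have hLF : LF f := LF_of hp hfm hXt
  have hGG : ∫⁻ y, GG ⌊s⌋₊ s f y ^ p ≤ K3 ^ p * Y := by
    rw [hY, ← lintegral_const_mul' _ _ (ENNReal.rpow_ne_top_of_nonneg hp0.le ENNReal.coe_ne_top)]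
    refine lintegral_mono fun y => ?_
    refine (ENNReal.rpow_le_rpow (hK3 f y) hp0.le).trans (le_of_eq ?_)
    rw [ENNReal.mul_rpow_of_nonneg _ _ hp0.le, ← ENNReal.rpow_mul, one_div_mul_eq_div]
    rfl
  have hXi : ∫⁻ x, ENNReal.ofReal |Ω.indicator f x| ^ p ≤ X := by
    refine lintegral_mono fun y => ENNReal.rpow_le_rpow (ENNReal.ofReal_le_ofReal ?_) hp0.le
    by_cases h : y ∈ Ω <;> simp [h]
  have hm1 : Measurable fun x => pw (infDist x (frontier Ω)) (-ε) *
      BB (frontier Ω) (ε - n - b - 1) (ZZ (frontier Ω) ⌊s⌋₊ s p b f) x :=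
    ((measurable_pw _).comp measurable_infDist).mul (BB_meas _ _ (ZZ_meas _ _ _ _ _ hLF hfm))
  have hm2 : Measurable fun x => Av f x 1 ^ p := (Av_one_meas hfm).pow_const p
  have hYi : ∫⁻ x, II ⌊s⌋₊ s q (Ω.indicator f) x ^ (p / q) ≤ K * (Y + X) := by
    calc ∫⁻ x, II ⌊s⌋₊ s q (Ω.indicator f) x ^ (p / q)
        ≤ ∫⁻ x, K1 * (II ⌊s⌋₊ s q f x ^ (p / q) +
        (pw (infDist x (frontier Ω)) (-ε) *
          BB (frontier Ω) (ε - n - b - 1) (ZZ (frontier Ω) ⌊s⌋₊ s p b f) x + Av f x 1 ^ p)) := by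
          apply lintegral_mono_ae
          filter_upwards [ae_pos hbd hne hd2] with x hx
          exact hK1 f hLF hfm htr x hx
      _ ≤ K1 * (Y + (K2 * (K3 ^ p * Y) + X)) := by
          have hm : Measurable fun x => pw (infDist x (frontier Ω)) (-ε) *
              BB (frontier Ω) (ε - n - b - 1) (ZZ (frontier Ω) ⌊s⌋₊ s p b f) x + Av f x 1 ^ p :=
            hm1.add hm2
          rw [lintegral_const_mul' _ _ hK1t, lintegral_add_right _ hm,
            lintegral_add_left hm1]
          refine mul_le_mul' le_rfl (add_le_add le_rfl (add_le_add ?_ (far_est hp hfm)))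
          exact (hK2 f hLF hfm).trans (mul_le_mul' le_rfl hGG)
      _ ≤ K1 * ((1 + K2 * K3 ^ p) * Y + (1 + K2 * K3 ^ p) * X) := by
          refine mul_le_mul' le_rfl ?_
          rw [← add_assoc]
          refine add_le_add (le_of_eq (by ring)) (le_mul_of_one_le_left' le_self_add)
      _ = _ := by rw [hK]; ring
  calc (∫⁻ x, ENNReal.ofReal |Ω.indicator f x| ^ p) ^ (1 / p) +
      (∫⁻ x, II ⌊s⌋₊ s q (Ω.indicator f) x ^ (p / q)) ^ (1 / p)
      ≤ X ^ (1 / p) + (K * (Y + X)) ^ (1 / p) :=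
        add_le_add (ENNReal.rpow_le_rpow hXi hp1') (ENNReal.rpow_le_rpow hYi hp1')
    _ ≤ X ^ (1 / p) + K ^ (1 / p) * (2 ^ (1 / p) * (Y ^ (1 / p) + X ^ (1 / p))) := by
        rw [ENNReal.mul_rpow_of_nonneg _ _ hp1']
        exact add_le_add le_rfl (mul_le_mul' le_rfl (add_rpow_le2 _ _ hp1'))
    _ ≤ (X ^ (1 / p) + Y ^ (1 / p)) + K ^ (1 / p) * (2 ^ (1 / p) * (Y ^ (1 / p) + X ^ (1 / p))) :=
        add_le_add le_self_add le_rfl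
    _ = _ := by rw [hL]; ring



/-- **`χ_Ω` is a pointwise multiplier on functions with vanishing boundary trace**
(Corollary 4.2). Let `Ω ⊆ ℝⁿ` (`n ≥ 2`) be a domain whose boundary is a `d`-set with
`n−1 < d < n`, `1 < p < ∞`, `1 ≤ q < ∞`, `s > (n−d)/p`. Then there is `c > 0` such that
every `f ∈ F^s_{pq}(ℝⁿ)` with `Tr_{∂Ω} f = 0` ℋᵈ-a.e. satisfies
`‖f χ_Ω‖_{F^s_{pq}(ℝⁿ)} ≤ c ‖f‖_{F^s_{pq}(ℝⁿ)}`. -/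
theorem multiplier_zero_trace {n : ℕ} (hn : 2 ≤ n) (Ω : Set (Rn n))
    (hΩo : IsOpen Ω) (hΩc : IsConnected Ω) (d C₀ : ℝ)
    (hbd : IsDSet (frontier Ω) d C₀) (hd1 : (n : ℝ) - 1 < d) (hd2 : d < n)
    (p q s : ℝ) (hp : 1 < p) (hq : 1 ≤ q) (hs : ((n : ℝ) - d) / p < s) :
    ∃ c > 0, ∀ f : Rn n → ℝ, Measurable f → tlNorm s p q f < ⊤ →
      TraceZero (frontier Ω) d f →
      tlNorm s p q (Ω.indicator f) ≤ ENNReal.ofReal c * tlNorm s p q f := by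
  rcases (frontier Ω).eq_empty_or_nonempty with he | hne
  · have hu : Ω = univ := (isClopen_iff_frontier_eq_empty.2 he).eq_univ hΩc.nonempty
    refine ⟨1, one_pos, fun f _ _ _ => ?_⟩
    rw [hu, indicator_univ, ENNReal.ofReal_one, one_mul]
  · exact main_ne hn Ω hΩo d C₀ hne hbd hd1 hd2 p q s hp hq hs
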